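/- arXiv:2111.07913 — 6 statements merged into one kernel-verified Lean document; each statement's English description precedes it below -/
import Mathlib

section
/- Let A ∈ ℝ^{m×n} have rank m and let P = {x ∈ ℝⁿ : Ax = b, x ≥ 0} for some b ∈ ℝ^m. Then there is an absolute constant C > 0 (independent of m, n, A, b) such that the circuit diameter of P is at most C · m · min{m, n − m} · log(m + κ_A). -/
open Matrix
open scoped BigOperators

noncomputable section
open Classical

/-- The set of elementary vectors of `ker(A)`: support-minimal nonzero kernel vectors. -/
def elemVecs {α β : Type} [Fintype α] [Fintype β] (A : Matrix α β ℝ) : Set (β → ℝ) :=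
  {g | A.mulVec g = 0 ∧ g ≠ 0 ∧
    ∀ h : β → ℝ, A.mulVec h = 0 → h ≠ 0 →
      ¬ ({i | h i ≠ 0} ⊂ {i | g i ≠ 0})}

/-- The circuit imbalance measure `κ_A`. -/
def circImb {α β : Type} [Fintype α] [Fintype β] (A : Matrix α β ℝ) : ℝ :=
  sSup {r : ℝ | ∃ g ∈ elemVecs A, ∃ i j, g i ≠ 0 ∧ g j ≠ 0 ∧ r = |g j| / |g i|}

/-- A circuit walk in `P`: each step adds an elementary vector, and each step is maximal. -/
def IsCircuitWalk {α β : Type} [Fintype α] [Fintype β] (A : Matrix α β ℝ)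
    (P : Set (β → ℝ)) {k : ℕ} (x : Fin (k + 1) → β → ℝ) : Prop :=
  (∀ i, x i ∈ P) ∧
  ∀ i : Fin k, ∃ g ∈ elemVecs A,
    x i.succ = x i.castSucc + g ∧
    ∀ ε : ℝ, 0 < ε → x i.castSucc + (1 + ε) • g ∉ P

/-!
To walk from `x` to a vertex `y`, decompose `y - x` conformally into at most `r = min {m, n - m}`
elementary vectors and follow, maximally, the one that most reduces the potential, the mass outside
the support of `y`. Each step multiplies the potential by at most `1 - 1 / r`, overshoots `y` at
most by the factor `r`, and sets some coordinate `i` to zero.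

Once `x i ≤ r * y i`, this persists, so each coordinate blocks at most once with `x i > r * y i`.
If `i` blocks with `x i ≤ r * y i`, then the potential before the step is at most
`m * r ^ 2 * κ * y i`, whereas the potential after any step that sets `i` to zero is at least
`y i / κ`. By the geometric decay, all such steps at `i` happen within `r * log (m * r ^ 2 * κ ^ 2)`
consecutive steps. Vertices have at most `m` nonzero coordinates, so only `O(m)` coordinates block.
-/

open Function Module

section RatioTest

theorem exists_nonneg_smul_le_and_eq {ι : Type*} [Finite ι] {p q : ι → ℝ} (hp : 0 ≤ p)
    (hq : ∃ i, 0 < q i) :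
    ∃ l : ℝ, 0 ≤ l ∧ l • q ≤ p ∧ ∃ i, 0 < q i ∧ l * q i = p i := by
  obtain ⟨i, hi, hmin⟩ := Set.exists_min_image {i | 0 < q i} (fun i => p i / q i)
    (Set.toFinite _) hq
  have hl : 0 ≤ p i / q i := div_nonneg (hp i) (le_of_lt hi)
  refine ⟨p i / q i, hl, fun j => ?_, i, hi, div_mul_cancel₀ _ (ne_of_gt hi)⟩
  rcases lt_or_ge 0 (q j) with hj | hj
  · exact (le_div_iff₀ hj).mp (hmin j hj)
  · exact (mul_nonpos_of_nonneg_of_nonpos hl hj).trans (hp j)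

end RatioTest

section Conformal

variable {ι : Type*} {r s : ℝ} {g h z : ι → ℝ}

theorem div_nonneg_of_forall_eq_mul (h : ∀ i, ∃ c : ℝ, 0 ≤ c ∧ g i = c * z i) : 0 ≤ g / z := by
  intro i
  obtain ⟨c, hc, hgi⟩ := h i
  rw [Pi.zero_apply, Pi.div_apply, hgi]
  rcases eq_or_ne (z i) 0 with hzi | hzi
  · rw [hzi, div_zero]
  · rwa [mul_div_cancel_right₀ c hzi]

/-- `g` is sign-consistent with `z` and dominated by `r * |z|`, coordinate by coordinate. For
`r = 1` this is the usual conformal order `g ⊑ z`; other values of `r` describe steps that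
overshoot a conformal one. -/
def IsConformal (r : ℝ) (g z : ι → ℝ) : Prop :=
  ∀ i, ∃ c ∈ Set.Icc 0 r, g i = c * z i

namespace IsConformal

theorem refl (z : ι → ℝ) : IsConformal 1 z z :=
  fun i => ⟨1, ⟨zero_le_one, le_rfl⟩, (one_mul (z i)).symm⟩

theorem trans (hg : IsConformal r g h) (hh : IsConformal s h z) : IsConformal (r * s) g z := by
  intro i
  obtain ⟨c, ⟨hc, hcr⟩, hgi⟩ := hg i
  obtain ⟨d, ⟨hd, hds⟩, hhi⟩ := hh i
  exact ⟨c * d, ⟨mul_nonneg hc hd, mul_le_mul hcr hds hd (hc.trans hcr)⟩,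
    by rw [hgi, hhi, mul_assoc]⟩

theorem sub_self_left (hg : IsConformal 1 g z) : IsConformal 1 (z - g) z := by
  intro i
  obtain ⟨c, ⟨hc, hc1⟩, hgi⟩ := hg i
  exact ⟨1 - c, ⟨by linarith, by linarith⟩, by rw [Pi.sub_apply, hgi]; ring⟩

theorem smul (hg : IsConformal 1 g z) {l : ℝ} (hl : 0 ≤ l) (hlr : l ≤ r) :
    IsConformal r (l • g) z := by
  intro i
  obtain ⟨c, ⟨hc, hc1⟩, hgi⟩ := hg i
  refine ⟨l * c, ⟨mul_nonneg hl hc, (mul_le_of_le_one_right hl hc1).trans hlr⟩, ?_⟩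
  rw [Pi.smul_apply, smul_eq_mul, hgi, mul_assoc]

theorem support_subset (hg : IsConformal r g z) : support g ⊆ support z := by
  intro i hi hzi
  obtain ⟨c, -, hgi⟩ := hg i
  exact hi (by rw [hgi, hzi, mul_zero])

theorem div_nonneg (hg : IsConformal r g z) : 0 ≤ g / z :=
  div_nonneg_of_forall_eq_mul fun i =>
    let ⟨c, hc, hgi⟩ := hg i
    ⟨c, hc.1, hgi⟩

theorem neg_le_of_sub {x y : ι → ℝ} (hg : IsConformal 1 g (y - x)) (hx : 0 ≤ x) (hy : 0 ≤ y) :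
    -g ≤ x := by
  intro i
  obtain ⟨c, ⟨hc, hc1⟩, hgi⟩ := hg i
  rw [Pi.neg_apply, hgi, Pi.sub_apply]
  nlinarith [mul_nonneg hc (hy i), mul_le_of_le_one_left (hx i) hc1]

end IsConformal

theorem exists_pos_smul_isConformal [Finite ι] (hs : support g ⊆ support z) (hq : 0 ≤ g / z)
    (hg : g ≠ 0) :
    ∃ l : ℝ, 0 < l ∧ IsConformal 1 (l • g) z ∧ ∃ i, z i ≠ 0 ∧ (l • g) i = z i := by
  have hmul (i : ι) : g i = g i / z i * z i :=
    (div_mul_cancel_of_imp fun hz => notMem_support.mp fun hi => hs hi hz).symm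
  obtain ⟨k, hk⟩ := Function.ne_iff.mp hg
  have hqk : 0 < (g / z) k := (hq k).lt_of_ne' (div_ne_zero hk (hs hk))
  obtain ⟨l, hl, hle, i, hqi, heq⟩ :=
    exists_nonneg_smul_le_and_eq (p := 1) zero_le_one ⟨k, hqk⟩
  have hl0 : l ≠ 0 := left_ne_zero_of_mul_eq_one heq
  refine ⟨l, hl.lt_of_ne' hl0, fun j => ⟨l * (g j / z j), ⟨mul_nonneg hl (hq j), hle j⟩, ?_⟩, i,
    (div_ne_zero_iff.mp hqi.ne').2, ?_⟩
  · rw [Pi.smul_apply, smul_eq_mul, mul_assoc, ← hmul]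
  · rw [Pi.smul_apply, smul_eq_mul, hmul, ← mul_assoc]
    exact (congrArg (· * z i) heq).trans (one_mul (z i))

end Conformal

section ElementaryVectors

variable {α β : Type} [Fintype α] [Fintype β] {A : Matrix α β ℝ} {g h z : β → ℝ} {i : β}

theorem smul_mem_elemVecs (hg : g ∈ elemVecs A) {c : ℝ} (hc : c ≠ 0) : c • g ∈ elemVecs A := by
  obtain ⟨hker, hne, hmin⟩ := hg
  refine ⟨by rw [mulVec_smul, hker, smul_zero], smul_ne_zero hc hne, fun h hh hh0 => ?_⟩
  change ¬ support h ⊂ support (c • g)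
  rw [support_const_smul_of_ne_zero c g hc]
  exact hmin h hh hh0

theorem eq_div_smul_of_support_subset (hg : g ∈ elemVecs A) (hh : A *ᵥ h = 0)
    (hs : support h ⊆ support g) (hi : g i ≠ 0) : h = (h i / g i) • g := by
  by_contra hne
  refine hg.2.2 (h - (h i / g i) • g) ?_ (sub_ne_zero.mpr hne) ?_
  · rw [mulVec_sub, mulVec_smul, hh, hg.1, smul_zero, sub_zero]
  · have hsub : support (h - (h i / g i) • g) ⊆ support g :=
      (support_sub _ _).trans (Set.union_subset hs (support_const_smul_subset _ g))
    exact (Set.ssubset_iff_of_subset hsub).mpr ⟨i, hi, by simp [hi]⟩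

theorem abs_div_abs_eq_of_support_eq (hg : g ∈ elemVecs A) (hh : h ∈ elemVecs A)
    (hs : support h = support g) (hi : g i ≠ 0) (j : β) : |h j| / |h i| = |g j| / |g i| := by
  have hhi : h i ≠ 0 := mem_support.mp (hs ▸ mem_support.mpr hi)
  have hj : h j = h i / g i * g j :=
    congrFun (eq_div_smul_of_support_subset hg hh.1 hs.subset hi) j
  rw [← abs_div, ← abs_div, hj]
  congr 1
  field_simp

variable (A) in
theorem bddAbove_circuit_ratios :
    BddAbove {r : ℝ | ∃ g ∈ elemVecs A, ∃ i j, g i ≠ 0 ∧ g j ≠ 0 ∧ r = |g j| / |g i|} := by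
  let ratios (p : Set β × β × β) : Set ℝ :=
    {r | ∃ g ∈ elemVecs A, support g = p.1 ∧ g p.2.1 ≠ 0 ∧ r = |g p.2.2| / |g p.2.1|}
  have hsub (p : Set β × β × β) : (ratios p).Subsingleton := by
    rintro _ ⟨g, hg, hgS, hi, rfl⟩ _ ⟨h, hh, hhS, -, rfl⟩
    exact (abs_div_abs_eq_of_support_eq hg hh (hhS.trans hgS.symm) hi p.2.2).symm
  refine ((Set.finite_iUnion fun p => (hsub p).finite).subset ?_).bddAbove
  rintro r ⟨g, hg, i, j, hi, -, hr⟩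
  exact Set.mem_iUnion.mpr ⟨(support g, i, j), g, hg, rfl, hi, hr⟩

variable (A) in
theorem circImb_nonneg : 0 ≤ circImb A := by
  refine Real.sSup_nonneg ?_
  rintro r ⟨g, -, i, j, -, -, rfl⟩
  positivity

theorem one_le_circImb (hg : g ∈ elemVecs A) : 1 ≤ circImb A := by
  obtain ⟨i, hi⟩ := Function.ne_iff.mp hg.2.1
  exact le_csSup (bddAbove_circuit_ratios A)
    ⟨g, hg, i, i, hi, hi, (div_self (abs_ne_zero.mpr hi)).symm⟩

theorem abs_apply_le_circImb_mul (hg : g ∈ elemVecs A) (hi : g i ≠ 0) (j : β) :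
    |g j| ≤ circImb A * |g i| := by
  by_cases hj : g j = 0
  · rw [hj, abs_zero]
    exact mul_nonneg (circImb_nonneg A) (abs_nonneg _)
  · exact (div_le_iff₀ (abs_pos.mpr hi)).mp
      (le_csSup (bddAbove_circuit_ratios A) ⟨g, hg, i, j, hi, hj, rfl⟩)

theorem exists_mulVec_eq_zero_support_ssubset (hz : A *ᵥ z = 0) (hz0 : z ≠ 0)
    (helem : z ∉ elemVecs A) :
    ∃ h, A *ᵥ h = 0 ∧ support h ⊂ support z ∧ ∃ i, 0 < (h / z) i := by
  obtain ⟨h, hh, hh0, hss⟩ : ∃ h, A *ᵥ h = 0 ∧ h ≠ 0 ∧ support h ⊂ support z := by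
    by_contra! hcon
    exact helem ⟨hz, hz0, hcon⟩
  obtain ⟨i, hi⟩ := Function.ne_iff.mp hh0
  rcases (div_ne_zero hi (hss.1 hi)).lt_or_gt with hneg | hpos
  · refine ⟨-h, by rw [mulVec_neg, hh, neg_zero], by rwa [support_neg], i, ?_⟩
    rw [Pi.div_apply, Pi.neg_apply, neg_div]
    exact neg_pos.mpr hneg
  · exact ⟨h, hh, hss, i, hpos⟩

theorem exists_isConformal_support_ssubset (hz : A *ᵥ z = 0) (hz0 : z ≠ 0)
    (helem : z ∉ elemVecs A) :
    ∃ z', A *ᵥ z' = 0 ∧ z' ≠ 0 ∧ IsConformal 1 z' z ∧ support z' ⊂ support z := by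
  obtain ⟨h, hh, hss, hpos⟩ := exists_mulVec_eq_zero_support_ssubset hz hz0 helem
  obtain ⟨l, -, hle, i, hqi, heq⟩ := exists_nonneg_smul_le_and_eq (p := 1) zero_le_one hpos
  have hzi : z i ≠ 0 := (div_ne_zero_iff.mp hqi.ne').2
  have hwz (j : β) : (z - l • h) j = (1 - l * (h / z) j) * z j := by
    have : h j / z j * z j = h j :=
      div_mul_cancel_of_imp fun hj => notMem_support.mp fun hhj => hss.1 hhj hj
    rw [Pi.sub_apply, Pi.smul_apply, smul_eq_mul, ← this, Pi.div_apply]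
    ring
  have hws : support (z - l • h) ⊆ support z := fun j hj hzj => hj (by rw [hwz, hzj, mul_zero])
  have hwi : (z - l • h) i = 0 := by rw [hwz, heq, Pi.one_apply, sub_self, zero_mul]
  have hw0 : z - l • h ≠ 0 := by
    obtain ⟨j, hj, hhj⟩ := Set.exists_of_ssubset hss
    refine fun hw => hj ?_
    simpa [notMem_support.mp hhj] using congrFun hw j
  have hwq : 0 ≤ (z - l • h) / z :=
    div_nonneg_of_forall_eq_mul fun j => ⟨_, sub_nonneg.mpr (hle j), hwz j⟩
  obtain ⟨c, hc, hconf, -⟩ := exists_pos_smul_isConformal hws hwq hw0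
  refine ⟨c • (z - l • h), ?_, smul_ne_zero hc.ne' hw0, hconf, ?_⟩
  · rw [mulVec_smul, mulVec_sub, mulVec_smul, hz, hh, smul_zero, sub_zero, smul_zero]
  · exact (Set.ssubset_iff_of_subset hconf.support_subset).mpr ⟨i, hzi, by simp [hwi]⟩

theorem exists_elemVec_isConformal (hz : A *ᵥ z = 0) (hz0 : z ≠ 0) :
    ∃ g ∈ elemVecs A, IsConformal 1 g z := by
  induction hU : support z using WellFoundedLT.induction generalizing z with
  | ind U ih =>
    by_cases helem : z ∈ elemVecs A
    · exact ⟨z, helem, .refl z⟩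
    · obtain ⟨z', hz', hz'0, hconf, hss⟩ := exists_isConformal_support_ssubset hz hz0 helem
      obtain ⟨g, hg, hgz'⟩ := ih (support z') (hU ▸ hss) hz' hz'0 rfl
      exact ⟨g, hg, by simpa only [one_mul] using hgz'.trans hconf⟩

theorem exists_elemVec_isConformal_apply_eq (hz : A *ᵥ z = 0) (hz0 : z ≠ 0) :
    ∃ g ∈ elemVecs A, IsConformal 1 g z ∧ ∃ i, z i ≠ 0 ∧ g i = z i := by
  obtain ⟨g, hg, hconf⟩ := exists_elemVec_isConformal hz hz0
  obtain ⟨l, hl, hlg⟩ := exists_pos_smul_isConformal hconf.support_subset hconf.div_nonneg hg.2.1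
  exact ⟨l • g, smul_mem_elemVecs hg hl.ne', hlg⟩

end ElementaryVectors

section SupportedOn

variable {ι : Type*} {U V : Set ι} {v : ι → ℝ}

/-- The coordinate subspace of `U`: the vectors whose support is contained in `U`. -/
def supportedOn (U : Set ι) : Submodule ℝ (ι → ℝ) :=
  ⨅ i ∈ Uᶜ, LinearMap.ker (LinearMap.proj i)

theorem mem_supportedOn : v ∈ supportedOn U ↔ support v ⊆ U := by
  simp only [supportedOn, Submodule.mem_iInf, LinearMap.mem_ker, LinearMap.proj_apply,
    Set.mem_compl_iff]
  exact forall_congr' fun i => not_imp_comm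

theorem finrank_supportedOn [Finite ι] (U : Set ι) :
    finrank ℝ (supportedOn U) = U.ncard := by
  have := Fintype.ofFinite U
  have e : supportedOn U ≃ₗ[ℝ] U → ℝ :=
    LinearMap.iInfKerProjEquiv ℝ (fun _ : ι => ℝ) disjoint_compl_right (Set.union_compl_self U).ge
  rw [e.finrank_eq, finrank_fintype_fun_eq_card, ← Nat.card_eq_fintype_card,
    Nat.card_coe_set_eq]

theorem supportedOn_mono (h : U ⊆ V) : supportedOn U ≤ supportedOn V :=
  fun _ hv => mem_supportedOn.mpr ((mem_supportedOn.mp hv).trans h)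

end SupportedOn

section ConformalDecomposition

variable {α β : Type} [Fintype β] {A : Matrix α β ℝ} {U V : Set β} {v z : β → ℝ}

/-- The kernel vectors of `A` supported in `U`; its dimension bounds the number of terms in a
conformal decomposition. -/
def kerOn (A : Matrix α β ℝ) (U : Set β) : Submodule ℝ (β → ℝ) :=
  LinearMap.ker A.mulVecLin ⊓ supportedOn U

theorem mem_kerOn : v ∈ kerOn A U ↔ A *ᵥ v = 0 ∧ support v ⊆ U :=
  and_congr LinearMap.mem_ker mem_supportedOn

theorem kerOn_mono (h : U ⊆ V) : kerOn A U ≤ kerOn A V :=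
  inf_le_inf_left _ (supportedOn_mono h)

theorem finrank_kerOn_lt (hUV : U ⊆ V) (hz : z ∈ kerOn A V) {i : β} (hi : z i ≠ 0) (hiU : i ∉ U) :
    finrank ℝ (kerOn A U) < finrank ℝ (kerOn A V) :=
  Submodule.finrank_lt_finrank_of_lt <| lt_of_le_of_ne (kerOn_mono hUV) fun heq =>
    hiU ((mem_kerOn.mp (heq ▸ hz)).2 hi)

theorem exists_conformal_decomposition [Fintype α] (hz : A *ᵥ z = 0) :
    ∃ s : Finset (β → ℝ), s.card ≤ finrank ℝ (kerOn A (support z)) ∧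
      (∀ g ∈ s, g ∈ elemVecs A ∧ IsConformal 1 g z) ∧ ∑ g ∈ s, g = z := by
  induction hU : support z using WellFoundedLT.induction generalizing z with
  | ind U ih =>
    subst hU
    rcases eq_or_ne z 0 with rfl | hz0
    · exact ⟨∅, Nat.zero_le _, by simp, by simp⟩
    obtain ⟨g, hg, hgz, i, hzi, hgi⟩ := exists_elemVec_isConformal_apply_eq hz hz0
    have hi : (z - g) i = 0 := by rw [Pi.sub_apply, hgi, sub_self]
    have hsub : support (z - g) ⊆ support z := hgz.sub_self_left.support_subset
    have hss : support (z - g) ⊂ support z :=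
      (Set.ssubset_iff_of_subset hsub).mpr ⟨i, hzi, not_not.mpr hi⟩
    obtain ⟨s, hcard, hs, hsum⟩ := ih _ hss (by rw [mulVec_sub, hz, hg.1, sub_zero]) rfl
    have hgs : g ∉ s := fun hmem =>
      notMem_support.mpr hi ((hs g hmem).2.support_subset (hgi ▸ hzi : g i ≠ 0))
    have hlt : finrank ℝ (kerOn A (support (z - g))) < finrank ℝ (kerOn A (support z)) :=
      finrank_kerOn_lt hsub (mem_kerOn.mpr ⟨hz, subset_rfl⟩) hzi (notMem_support.mpr hi)
    refine ⟨insert g s, ?_, fun h hh => ?_, by rw [Finset.sum_insert hgs, hsum, add_sub_cancel]⟩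
    · rw [Finset.card_insert_of_notMem hgs]
      omega
    · rcases Finset.mem_insert.mp hh with rfl | hh
      · exact ⟨hg, hgz⟩
      · exact ⟨(hs h hh).1, by simpa only [one_mul] using (hs h hh).2.trans hgz.sub_self_left⟩

end ConformalDecomposition

section Vertices

variable {α β : Type} [Fintype β] {A : Matrix α β ℝ} {b : α → ℝ} {v x y : β → ℝ}

/-- The polyhedron `{z | A z = b, z ≥ 0}` in standard form. -/
def stdPolyhedron (A : Matrix α β ℝ) (b : α → ℝ) : Set (β → ℝ) :=
  {z | A *ᵥ z = b ∧ 0 ≤ z}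

theorem add_smul_mem_stdPolyhedron (hx : x ∈ stdPolyhedron A b) (hv : A *ᵥ v = 0) {l : ℝ}
    (h : 0 ≤ x + l • v) : x + l • v ∈ stdPolyhedron A b :=
  ⟨by rw [mulVec_add, mulVec_smul, hv, hx.1, smul_zero, add_zero], h⟩

theorem mulVec_sub_eq_zero (hx : x ∈ stdPolyhedron A b) (hy : y ∈ stdPolyhedron A b) :
    A *ᵥ (y - x) = 0 := by
  rw [mulVec_sub, hx.1, hy.1, sub_self]

theorem eq_zero_of_mem_extremePoints (hy : y ∈ (stdPolyhedron A b).extremePoints ℝ)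
    (hv : A *ᵥ v = 0) (hs : support v ⊆ support y) : v = 0 := by
  by_contra hne
  obtain ⟨k, hk⟩ := Function.ne_iff.mp hne
  obtain ⟨l, hl, hle, i, hvi, heq⟩ :=
    exists_nonneg_smul_le_and_eq (q := fun i => |v i|) hy.1.2 ⟨k, abs_pos.mpr hk⟩
  have hl0 : l ≠ 0 := left_ne_zero_of_mul (heq ▸ hs (abs_pos.mp hvi) : l * |v i| ≠ 0)
  have hmem (s : ℝ) (hsl : |s| = l) : y + s • v ∈ stdPolyhedron A b := by
    refine add_smul_mem_stdPolyhedron hy.1 hv fun j => ?_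
    have hj : |s * v j| ≤ y j := by rw [abs_mul, hsl]; exact hle j
    simpa using neg_le_iff_add_nonneg'.mp ((neg_le_neg hj).trans (neg_abs_le (s * v j)))
  have hmid : y ∈ openSegment ℝ (y + l • v) (y + (-l) • v) :=
    ⟨1 / 2, 1 / 2, by norm_num, by norm_num, by norm_num, by module⟩
  have hlv : y + l • v = y :=
    hy.2 (hmem l (abs_of_nonneg hl)) (hmem (-l) (by rw [abs_neg, abs_of_nonneg hl])) hmid
  exact smul_ne_zero hl0 hne (add_eq_left.mp hlv)

theorem disjoint_ker_supportedOn_support (hy : y ∈ (stdPolyhedron A b).extremePoints ℝ) :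
    Disjoint (LinearMap.ker A.mulVecLin) (supportedOn (support y)) :=
  Submodule.disjoint_def.mpr fun _ hv hs =>
    eq_zero_of_mem_extremePoints hy (LinearMap.mem_ker.mp hv) (mem_supportedOn.mp hs)

variable (A) in
theorem rank_add_finrank_ker : A.rank + finrank ℝ (LinearMap.ker A.mulVecLin) = Fintype.card β := by
  rw [← finrank_fintype_fun_eq_card (R := ℝ)]
  exact LinearMap.finrank_range_add_finrank_ker A.mulVecLin

theorem ncard_support_le_rank (hy : y ∈ (stdPolyhedron A b).extremePoints ℝ) :
    (support y).ncard ≤ A.rank := by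
  have hdim := Submodule.finrank_add_finrank_le_of_disjoint (disjoint_ker_supportedOn_support hy)
  rw [finrank_supportedOn, finrank_fintype_fun_eq_card] at hdim
  have := rank_add_finrank_ker A
  omega

theorem finrank_kerOn_union_le (hx : x ∈ (stdPolyhedron A b).extremePoints ℝ) (U : Set β) :
    finrank ℝ (kerOn A (support x ∪ U)) ≤ U.ncard := by
  have hinf : kerOn A (support x ∪ U) ⊓ supportedOn (support x) = ⊥ :=
    ((disjoint_ker_supportedOn_support hx).mono_left inf_le_left).eq_bot
  have hsup : kerOn A (support x ∪ U) ⊔ supportedOn (support x) ≤ supportedOn (support x ∪ U) :=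
    sup_le inf_le_right (supportedOn_mono Set.subset_union_left)
  have hdim := Submodule.finrank_sup_add_finrank_inf_eq
    (kerOn A (support x ∪ U)) (supportedOn (support x))
  have hle := Submodule.finrank_mono hsup
  rw [hinf, finrank_bot, finrank_supportedOn] at hdim
  rw [finrank_supportedOn] at hle
  have := Set.ncard_union_le (support x) U
  omega

theorem finrank_kerOn_support_union_le (hx : x ∈ (stdPolyhedron A b).extremePoints ℝ)
    (hy : y ∈ (stdPolyhedron A b).extremePoints ℝ) :
    finrank ℝ (kerOn A (support x ∪ support y)) ≤ min A.rank (Fintype.card β - A.rank) := by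
  refine le_min ((finrank_kerOn_union_le hx _).trans (ncard_support_le_rank hy)) ?_
  have hker : finrank ℝ (kerOn A (support x ∪ support y)) ≤ finrank ℝ (LinearMap.ker A.mulVecLin) :=
    Submodule.finrank_mono inf_le_left
  have := rank_add_finrank_ker A
  omega

end Vertices

section Potential

variable {ι : Type*} [Fintype ι] {r : ℝ} {g x y : ι → ℝ}

/-- The potential of the argument: the sum of the coordinates outside the support of the target
vertex `y`. -/
def massOff (y : ι → ℝ) : (ι → ℝ) →ₗ[ℝ] ℝ :=
  ∑ i with y i = 0, LinearMap.proj i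

theorem massOff_apply (y x : ι → ℝ) : massOff y x = ∑ i with y i = 0, x i := by
  simp only [massOff, LinearMap.sum_apply, LinearMap.proj_apply]

theorem massOff_nonneg (y : ι → ℝ) (hx : 0 ≤ x) : 0 ≤ massOff y x := by
  rw [massOff_apply]
  exact Finset.sum_nonneg fun i _ => hx i

theorem massOff_self (y : ι → ℝ) : massOff y y = 0 := by
  rw [massOff_apply]
  exact Finset.sum_eq_zero fun i hi => (Finset.mem_filter.mp hi).2

theorem massOff_eq_sum_neg {s : Finset (ι → ℝ)} (hsum : ∑ g ∈ s, g = y - x) :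
    massOff y x = ∑ g ∈ s, -massOff y g := by
  rw [Finset.sum_neg_distrib, ← map_sum, hsum, map_sub, massOff_self, zero_sub, neg_neg]

theorem IsConformal.abs_apply_le_neg_massOff (hg : IsConformal r g (y - x)) (hx : 0 ≤ x) {j : ι}
    (hj : y j = 0) : |g j| ≤ -massOff y g := by
  have hnonpos (i : ι) (hi : y i = 0) : g i ≤ 0 := by
    obtain ⟨c, ⟨hc, -⟩, hgi⟩ := hg i
    rw [hgi, Pi.sub_apply, hi, zero_sub]
    exact mul_nonpos_of_nonneg_of_nonpos hc (neg_nonpos.mpr (hx i))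
  rw [abs_of_nonpos (hnonpos j hj), massOff_apply, ← Finset.sum_neg_distrib]
  exact Finset.single_le_sum (f := fun i => -g i)
    (fun i hi => neg_nonneg.mpr (hnonpos i (Finset.mem_filter.mp hi).2)) (by simpa using hj)

end Potential

section PotentialAtVertex

variable {α β : Type} [Fintype α] [Fintype β] {A : Matrix α β ℝ} {b : α → ℝ} {g x y : β → ℝ} {r : ℝ}

theorem exists_apply_eq_zero_of_mem_elemVecs (hy : y ∈ (stdPolyhedron A b).extremePoints ℝ)
    (hg : g ∈ elemVecs A) : ∃ j, y j = 0 ∧ g j ≠ 0 := by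
  by_contra! hcon
  exact hg.2.1 (eq_zero_of_mem_extremePoints hy hg.1 fun j hj hyj => hj (hcon j hyj))

theorem neg_massOff_pos (hy : y ∈ (stdPolyhedron A b).extremePoints ℝ) (hx : 0 ≤ x)
    (hg : g ∈ elemVecs A) (hconf : IsConformal r g (y - x)) : 0 < -massOff y g := by
  obtain ⟨j, hj, hgj⟩ := exists_apply_eq_zero_of_mem_elemVecs hy hg
  exact (abs_pos.mpr hgj).trans_le (hconf.abs_apply_le_neg_massOff hx hj)

theorem abs_apply_le_circImb_mul_neg_massOff (hy : y ∈ (stdPolyhedron A b).extremePoints ℝ)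
    (hx : 0 ≤ x) (hg : g ∈ elemVecs A) (hconf : IsConformal r g (y - x)) (i : β) :
    |g i| ≤ circImb A * -massOff y g := by
  obtain ⟨j, hj, hgj⟩ := exists_apply_eq_zero_of_mem_elemVecs hy hg
  exact (abs_apply_le_circImb_mul hg hgj i).trans
    (mul_le_mul_of_nonneg_left (hconf.abs_apply_le_neg_massOff hx hj) (circImb_nonneg A))

theorem abs_sub_apply_le_circImb_mul_massOff (hy : y ∈ (stdPolyhedron A b).extremePoints ℝ)
    (hx : x ∈ stdPolyhedron A b) (i : β) : |y i - x i| ≤ circImb A * massOff y x := by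
  obtain ⟨s, -, hs, hsum⟩ := exists_conformal_decomposition (mulVec_sub_eq_zero hx hy.1)
  calc |y i - x i| = |∑ g ∈ s, g i| := by rw [← Finset.sum_apply, hsum, Pi.sub_apply]
    _ ≤ ∑ g ∈ s, |g i| := Finset.abs_sum_le_sum_abs _ _
    _ ≤ ∑ g ∈ s, circImb A * -massOff y g := Finset.sum_le_sum fun g hg =>
        abs_apply_le_circImb_mul_neg_massOff hy hx.2 (hs g hg).1 (hs g hg).2 i
    _ = circImb A * massOff y x := by rw [← Finset.mul_sum, massOff_eq_sum_neg hsum]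

theorem neg_massOff_le_ncard_mul (hg : g ∈ elemVecs A) {i : β} (hi : g i ≠ 0) {U : Set β}
    (hU : support g ⊆ U ∪ support y) :
    -massOff y g ≤ U.ncard * (circImb A * |g i|) := by
  have hsub : ({j | y j = 0} : Finset β).filter (fun j => -g j ≠ 0) ⊆ U.toFinset := by
    intro j hj
    simp only [Finset.mem_filter, Finset.mem_univ, true_and, neg_ne_zero] at hj
    exact Set.mem_toFinset.mpr ((hU hj.2).resolve_right (not_not.mpr hj.1))
  have hbound : 0 ≤ circImb A * |g i| := mul_nonneg (circImb_nonneg A) (abs_nonneg _)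
  calc -massOff y g
      = ∑ j ∈ ({j | y j = 0} : Finset β).filter (fun j => -g j ≠ 0), -g j := by
        rw [Finset.sum_filter_ne_zero, Finset.sum_neg_distrib, massOff_apply]
    _ ≤ _ • (circImb A * |g i|) := Finset.sum_le_card_nsmul _ _ _ fun j _ =>
        (neg_le_abs _).trans (abs_apply_le_circImb_mul hg hi j)
    _ ≤ U.toFinset.card • (circImb A * |g i|) :=
        nsmul_le_nsmul_left hbound (Finset.card_le_card hsub)
    _ = U.ncard * (circImb A * |g i|) := by rw [nsmul_eq_mul, Set.ncard_eq_toFinset_card']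

end PotentialAtVertex

section GreedyStep

variable {α β : Type} [Fintype α] [Fintype β] {A : Matrix α β ℝ} {b : α → ℝ} {x x' y : β → ℝ}
  {r : ℝ} {i : β}

/-- A maximal circuit step from `x` to `x'` towards `y` which blocks at the coordinate `i`, whose
direction is up to a factor `r` conformal to `y - x`, and which decreases the potential by a factor
`1 - 1 / r`. -/
structure IsGreedyStep (A : Matrix α β ℝ) (y : β → ℝ) (r : ℝ) (x : β → ℝ) (i : β) (x' : β → ℝ) :
    Prop where
  sub_mem_elemVecs : x' - x ∈ elemVecs A
  isConformal : IsConformal r (x' - x) (y - x)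
  massOff_le : massOff y x' ≤ (1 - 1 / r) * massOff y x
  nonneg : 0 ≤ x'
  pos : 0 < x i
  eq_zero : x' i = 0


theorem exists_conformal_elemVec_massOff_le (hy : y ∈ (stdPolyhedron A b).extremePoints ℝ)
    (hx : x ∈ stdPolyhedron A b) (hne : x ≠ y) {d : ℕ}
    (hd : finrank ℝ (kerOn A (support (y - x))) ≤ d) :
    ∃ g ∈ elemVecs A, IsConformal 1 g (y - x) ∧ massOff y x ≤ d * -massOff y g := by
  obtain ⟨s, hcard, hs, hsum⟩ := exists_conformal_decomposition (mulVec_sub_eq_zero hx hy.1)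
  have hs0 : s.Nonempty := Finset.nonempty_iff_ne_empty.mpr fun h =>
    hne (sub_eq_zero.mp (hsum.symm.trans (by rw [h, Finset.sum_empty]))).symm
  obtain ⟨g, hg, hmax⟩ := s.exists_max_image (fun g => -massOff y g) hs0
  refine ⟨g, (hs g hg).1, (hs g hg).2, ?_⟩
  have hpos := neg_massOff_pos hy hx.2 (hs g hg).1 (hs g hg).2
  calc massOff y x = ∑ g ∈ s, -massOff y g := massOff_eq_sum_neg hsum
    _ ≤ s.card • -massOff y g := Finset.sum_le_card_nsmul _ _ _ hmax
    _ ≤ d • -massOff y g := nsmul_le_nsmul_left hpos.le (hcard.trans hd)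
    _ = d * -massOff y g := nsmul_eq_mul _ _

theorem exists_maximal_step_length {g : β → ℝ} (hy : 0 ≤ y) (hx : 0 ≤ x)
    (hconf : IsConformal 1 g (y - x)) (hpot : 0 < -massOff y g)
    (hr : massOff y x ≤ r * -massOff y g) :
    ∃ l ∈ Set.Icc 1 r, 0 ≤ x + l • g ∧ ∃ i, 0 < x i ∧ (x + l • g) i = 0 := by
  have hneg : ∃ i, 0 < (-g) i := by
    by_contra! hcon
    linarith [massOff_nonneg y fun i => neg_nonpos.mp (hcon i)]
  obtain ⟨l, -, hle, i, hgi, heq⟩ := exists_nonneg_smul_le_and_eq hx hneg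
  have hl1 : 1 ≤ l := le_of_mul_le_mul_right
    (by rw [one_mul, heq]; exact hconf.neg_le_of_sub hx hy i) hgi
  have hnonneg : 0 ≤ x + l • g := by
    rw [smul_neg] at hle
    exact neg_le_iff_add_nonneg.mp hle
  have hlr : l ≤ r := by
    have hpot' := massOff_nonneg y hnonneg
    rw [map_add, map_smul, smul_eq_mul] at hpot'
    exact le_of_mul_le_mul_right (by linarith) hpot
  refine ⟨l, ⟨hl1, hlr⟩, hnonneg, i, heq ▸ mul_pos (by linarith) hgi, ?_⟩
  rw [Pi.add_apply, Pi.smul_apply, smul_eq_mul, ← heq, Pi.neg_apply]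
  ring

theorem exists_isGreedyStep (hy : y ∈ (stdPolyhedron A b).extremePoints ℝ)
    (hx : x ∈ stdPolyhedron A b) (hne : x ≠ y) {d : ℕ}
    (hd : finrank ℝ (kerOn A (support (y - x))) ≤ d) :
    ∃ i x', IsGreedyStep A y d x i x' := by
  obtain ⟨g, hg, hconf, hlarge⟩ := exists_conformal_elemVec_massOff_le hy hx hne hd
  have hpot := neg_massOff_pos hy hx.2 hg hconf
  obtain ⟨l, ⟨hl1, hlr⟩, hnonneg, i, hxi, hi⟩ :=
    exists_maximal_step_length hy.1.2 hx.2 hconf hpot hlarge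
  have hl0 : 0 < l := zero_lt_one.trans_le hl1
  have hd0 : (0 : ℝ) < d := hl0.trans_le hlr
  refine ⟨i, x + l • g, ?_, ?_, ?_, hnonneg, hxi, hi⟩
  · rw [add_sub_cancel_left]
    exact smul_mem_elemVecs hg hl0.ne'
  · rw [add_sub_cancel_left]
    exact hconf.smul hl0.le hlr
  · calc massOff y (x + l • g) = massOff y x - l * -massOff y g := by
          rw [map_add, map_smul, smul_eq_mul, mul_neg, sub_neg_eq_add]
      _ ≤ massOff y x - massOff y x / d := by
          have hshare : massOff y x / d ≤ -massOff y g := (div_le_iff₀' hd0).mpr hlarge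
          linarith [le_mul_of_one_le_left hpot.le hl1]
      _ = (1 - 1 / d) * massOff y x := by ring

namespace IsGreedyStep

variable (h : IsGreedyStep A y r x i x')
include h

theorem ratio_pos : 0 < r := by
  obtain ⟨c, ⟨hc, hcr⟩, hstep⟩ := h.isConformal i
  rw [Pi.sub_apply, h.eq_zero, zero_sub] at hstep
  have hc0 : c ≠ 0 := left_ne_zero_of_mul (hstep ▸ neg_ne_zero.mpr h.pos.ne')
  exact (hc.lt_of_ne' hc0).trans_le hcr

theorem mem_stdPolyhedron (hx : x ∈ stdPolyhedron A b) : x' ∈ stdPolyhedron A b := by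
  refine ⟨?_, h.nonneg⟩
  rw [← sub_add_cancel x' x, mulVec_add, h.sub_mem_elemVecs.1, hx.1, zero_add]

theorem add_smul_notMem_stdPolyhedron {ε : ℝ} (hε : 0 < ε) :
    x + (1 + ε) • (x' - x) ∉ stdPolyhedron A b := by
  rintro ⟨-, hnonneg⟩
  have hi := hnonneg i
  simp only [Pi.zero_apply, Pi.add_apply, Pi.smul_apply, Pi.sub_apply, smul_eq_mul,
    h.eq_zero] at hi
  linarith [mul_pos hε h.pos]

theorem support_subset {V : Set β} (hx : support x ⊆ V) (hy : support y ⊆ V) :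
    support x' ⊆ V := by
  have hsub : support (x' - x) ⊆ V :=
    h.isConformal.support_subset.trans ((support_sub y x).trans (Set.union_subset hy hx))
  rw [← sub_add_cancel x' x]
  exact (support_add _ _).trans (Set.union_subset hsub hx)

theorem apply_le_mul (hr : 1 ≤ r) (hx : 0 ≤ x) {j : β} (hj : x j ≤ r * y j) :
    x' j ≤ r * y j := by
  obtain ⟨c, ⟨hc, hcr⟩, hstep⟩ := h.isConformal j
  rw [Pi.sub_apply, Pi.sub_apply] at hstep
  rcases le_total (y j) (x j) with hle | hle
  · linarith [mul_nonneg hc (sub_nonneg.mpr hle)]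
  · linarith [mul_le_mul_of_nonneg_right hcr (sub_nonneg.mpr hle),
      mul_nonneg (sub_nonneg.mpr hr) (hx j)]

theorem massOff_le_mul_apply {U : Set β} (hU : support x ⊆ U ∪ support y) :
    massOff y x ≤ r * (U.ncard * (circImb A * x i)) := by
  have hi : (x' - x) i = -x i := by rw [Pi.sub_apply, h.eq_zero, zero_sub]
  have hsupp : support (x' - x) ⊆ U ∪ support y := h.isConformal.support_subset.trans <|
    (support_sub y x).trans (Set.union_subset Set.subset_union_right hU)
  have hdrop := neg_massOff_le_ncard_mul h.sub_mem_elemVecs (hi ▸ neg_ne_zero.mpr h.pos.ne') hsupp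
  rw [hi, abs_neg, abs_of_pos h.pos, map_sub] at hdrop
  have hpot : (1 - 1 / r) * massOff y x = massOff y x - massOff y x / r := by ring
  exact (div_le_iff₀' h.ratio_pos).mp (by linarith [h.massOff_le])

end IsGreedyStep

end GreedyStep

section Counting

theorem card_le_mul_card_of_window {ι : Type*} {S : Finset ℕ} {f : ℕ → ι} {V : Finset ι} {L : ℕ}
    (hf : ∀ t ∈ S, f t ∈ V)
    (hS : ∀ t ∈ S, ∀ t' ∈ S, t ≤ t' → f t = f t' → t' < t + L) :
    S.card ≤ L * V.card := by
  refine Finset.card_le_mul_card_image_of_maps_to hf L fun v _ => ?_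
  rcases (S.filter fun t => f t = v).eq_empty_or_nonempty with hempty | hne
  · simp [hempty]
  · set t₀ := (S.filter fun t => f t = v).min' hne
    obtain ⟨ht₀, hft₀⟩ := Finset.mem_filter.mp (Finset.min'_mem _ hne)
    have hsub : (S.filter fun t => f t = v) ⊆ Finset.Ico t₀ (t₀ + L) := fun t ht => by
      have hle : t₀ ≤ t := Finset.min'_le _ t ht
      obtain ⟨htS, hft⟩ := Finset.mem_filter.mp ht
      exact Finset.mem_Ico.mpr ⟨hle, hS t₀ ht₀ t htS hle (hft₀.trans hft.symm)⟩
    simpa using Finset.card_le_card hsub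

theorem le_exp_neg_div_mul_of_le_one_sub_mul {p : ℕ → ℝ} {r : ℝ} {T : ℕ} (hp : ∀ t, 0 ≤ p t)
    (hdec : ∀ t < T, p (t + 1) ≤ (1 - 1 / r) * p t) (t s : ℕ) (hT : t + s ≤ T) :
    p (t + s) ≤ Real.exp (-(s / r)) * p t := by
  induction s with
  | zero => simp
  | succ s ih =>
    calc p (t + s + 1) ≤ (1 - 1 / r) * p (t + s) := hdec (t + s) (by omega)
      _ ≤ Real.exp (-(1 / r)) * p (t + s) :=
          mul_le_mul_of_nonneg_right (Real.one_sub_le_exp_neg _) (hp _)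
      _ ≤ Real.exp (-(1 / r)) * (Real.exp (-(s / r)) * p t) :=
          mul_le_mul_of_nonneg_left (ih (by omega)) (Real.exp_pos _).le
      _ = Real.exp (-((s + 1 : ℕ) / r)) * p t := by
          rw [← mul_assoc, ← Real.exp_add]
          push_cast
          ring_nf

end Counting

section GreedyRun

variable {α β : Type} [Fintype α] [Fintype β] {A : Matrix α β ℝ} {b : α → ℝ} {y : β → ℝ} {r : ℝ}
  {U : Set β} {N T : ℕ} {w : ℕ → β → ℝ} {i : ℕ → β}

theorem apply_le_mul_of_greedySteps (hr : 1 ≤ r) (hw : ∀ t, w t ∈ stdPolyhedron A b)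
    (hstep : ∀ t < T, IsGreedyStep A y r (w t) (i t) (w (t + 1))) {j : β} {t t' : ℕ}
    (htt' : t ≤ t') (ht' : t' ≤ T) (hj : w t j ≤ r * y j) : w t' j ≤ r * y j := by
  induction t', htt' using Nat.le_induction with
  | base => exact hj
  | succ k _ ih => exact (hstep k (by omega)).apply_le_mul hr (hw k).2 (ih (by omega))

theorem add_one_le_mul_log_of_greedySteps (hy : y ∈ (stdPolyhedron A b).extremePoints ℝ)
    (hw : ∀ t, w t ∈ stdPolyhedron A b)
    (hstep : ∀ t < T, IsGreedyStep A y r (w t) (i t) (w (t + 1)))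
    (hU : ∀ t, support (w t) ⊆ U ∪ support y) (hUN : U.ncard ≤ N) {t s : ℕ} (hT : t + s < T)
    (hi : i t = i (t + s)) (hle : w t (i t) ≤ r * y (i t)) :
    (s + 1 : ℝ) ≤ r * Real.log (N * r ^ 2 * circImb A ^ 2) := by
  have hr0 : 0 < r := (hstep t (by omega)).ratio_pos
  have hκ := circImb_nonneg A
  have hyi : 0 < y (i t) :=
    pos_of_mul_pos_right ((hstep t (by omega)).pos.trans_le hle) hr0.le
  have hstart : massOff y (w t) ≤ r * (N * (circImb A * (r * y (i t)))) := by
    refine ((hstep t (by omega)).massOff_le_mul_apply (hU t)).trans ?_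
    have := (hstep t (by omega)).pos
    gcongr
  have hend : y (i t) ≤ circImb A * massOff y (w (t + (s + 1))) := by
    have hzero : w (t + (s + 1)) (i t) = 0 := hi ▸ (hstep (t + s) hT).eq_zero
    simpa [hzero, abs_of_pos hyi] using
      abs_sub_apply_le_circImb_mul_massOff hy (hw (t + (s + 1))) (i t)
  have hdecay := le_exp_neg_div_mul_of_le_one_sub_mul (fun t => massOff_nonneg y (hw t).2)
    (fun t ht => (hstep t ht).massOff_le) t (s + 1) (by omega)
  have hM : Real.exp ((s + 1 : ℕ) / r) ≤ N * r ^ 2 * circImb A ^ 2 := by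
    refine le_of_mul_le_mul_right ?_ (mul_pos (Real.exp_pos (-((s + 1 : ℕ) / r))) hyi)
    calc Real.exp ((s + 1 : ℕ) / r) * (Real.exp (-((s + 1 : ℕ) / r)) * y (i t))
        = y (i t) := by rw [← mul_assoc, ← Real.exp_add, add_neg_cancel, Real.exp_zero, one_mul]
      _ ≤ circImb A * (Real.exp (-((s + 1 : ℕ) / r)) *
            (r * (N * (circImb A * (r * y (i t)))))) :=
          hend.trans <| mul_le_mul_of_nonneg_left
            (hdecay.trans (mul_le_mul_of_nonneg_left hstart (Real.exp_pos _).le)) hκ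
      _ = N * r ^ 2 * circImb A ^ 2 * (Real.exp (-((s + 1 : ℕ) / r)) * y (i t)) := by ring
  have hlog := (Real.le_log_iff_exp_le ((Real.exp_pos _).trans_le hM)).mpr hM
  exact_mod_cast (div_le_iff₀' hr0).mp hlog

theorem card_overshooting_greedySteps_le (hr : 1 ≤ r) (hy : 0 ≤ y)
    (hw : ∀ t, w t ∈ stdPolyhedron A b)
    (hstep : ∀ t < T, IsGreedyStep A y r (w t) (i t) (w (t + 1)))
    (hU : ∀ t, support (w t) ⊆ U) :
    ((Finset.range T).filter fun t => ¬ w t (i t) ≤ r * y (i t)).card ≤ U.ncard := by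
  rw [Set.ncard_eq_toFinset_card', ← one_mul U.toFinset.card]
  refine card_le_mul_card_of_window (f := i) (fun t ht => ?_) fun t ht t' ht' _ hi => ?_
  · obtain ⟨htT, -⟩ := Finset.mem_filter.mp ht
    exact Set.mem_toFinset.mpr (hU t (hstep t (Finset.mem_range.mp htT)).pos.ne')
  · obtain ⟨htT, -⟩ := Finset.mem_filter.mp ht
    obtain ⟨ht'T, hover⟩ := Finset.mem_filter.mp ht'
    by_contra! hlt
    refine hover (hi ▸ apply_le_mul_of_greedySteps hr hw hstep hlt (Finset.mem_range.mp ht'T).le ?_)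
    rw [(hstep t (Finset.mem_range.mp htT)).eq_zero]
    exact mul_nonneg (by linarith) (hy _)

theorem card_nonovershooting_greedySteps_le (hy : y ∈ (stdPolyhedron A b).extremePoints ℝ)
    (hw : ∀ t, w t ∈ stdPolyhedron A b)
    (hstep : ∀ t < T, IsGreedyStep A y r (w t) (i t) (w (t + 1)))
    (hU : ∀ t, support (w t) ⊆ U ∪ support y) (hUN : U.ncard ≤ N) :
    ((Finset.range T).filter fun t => w t (i t) ≤ r * y (i t)).card ≤
      ⌊r * Real.log (N * r ^ 2 * circImb A ^ 2)⌋₊ * (support y).ncard := by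
  rw [Set.ncard_eq_toFinset_card']
  refine card_le_mul_card_of_window (f := i) (fun t ht => ?_) fun t ht t' ht' hle hi => ?_
  · obtain ⟨htT, hbound⟩ := Finset.mem_filter.mp ht
    have hpos := (hstep t (Finset.mem_range.mp htT)).pos.trans_le hbound
    exact Set.mem_toFinset.mpr (right_ne_zero_of_mul hpos.ne')
  · obtain ⟨s, rfl⟩ := Nat.exists_eq_add_of_le hle
    obtain ⟨-, hbound⟩ := Finset.mem_filter.mp ht
    have ht'T := Finset.mem_range.mp (Finset.mem_filter.mp ht').1
    have hs := add_one_le_mul_log_of_greedySteps hy hw hstep hU hUN ht'T hi hbound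
    exact Nat.add_lt_add_left (Nat.le_floor (by exact_mod_cast hs)) t

theorem length_le_of_greedySteps (hr : 1 ≤ r) (hκ : 1 ≤ circImb A) (hN : 1 ≤ N)
    (hy : y ∈ (stdPolyhedron A b).extremePoints ℝ) (hw : ∀ t, w t ∈ stdPolyhedron A b)
    (hstep : ∀ t < T, IsGreedyStep A y r (w t) (i t) (w (t + 1)))
    (hU : ∀ t, support (w t) ⊆ U ∪ support y) (hUN : U.ncard ≤ N) (hyN : (support y).ncard ≤ N) :
    (T : ℝ) ≤ 2 * N + N * (r * Real.log (N * r ^ 2 * circImb A ^ 2)) := by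
  set M : ℝ := N * r ^ 2 * circImb A ^ 2
  have hM : 1 ≤ M := one_le_mul_of_one_le_of_one_le
    (one_le_mul_of_one_le_of_one_le (Nat.one_le_cast.mpr hN) (one_le_pow₀ hr)) (one_le_pow₀ hκ)
  have hrM : 0 ≤ r * Real.log M := mul_nonneg (by linarith) (Real.log_nonneg hM)
  have hover := (card_overshooting_greedySteps_le hr hy.1.2 hw hstep hU).trans
    (Set.ncard_union_le U (support y))
  have hnon : ((Finset.range T).filter fun t => w t (i t) ≤ r * y (i t)).card ≤
      ⌊r * Real.log M⌋₊ * N :=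
    (card_nonovershooting_greedySteps_le hy hw hstep hU hUN).trans (Nat.mul_le_mul_left _ hyN)
  have hsplit := Finset.card_filter_add_card_filter_not (s := Finset.range T)
    (fun t => w t (i t) ≤ r * y (i t))
  rw [Finset.card_range] at hsplit
  have hT : T ≤ 2 * N + ⌊r * Real.log M⌋₊ * N := by omega
  calc (T : ℝ) ≤ 2 * N + ⌊r * Real.log M⌋₊ * N := by exact_mod_cast hT
    _ ≤ 2 * N + r * Real.log M * N := by gcongr; exact Nat.floor_le hrM
    _ = 2 * N + N * (r * Real.log M) := by ring

theorem isCircuitWalk_of_greedySteps (hw : ∀ t, w t ∈ stdPolyhedron A b)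
    (hstep : ∀ t < T, ∃ i, IsGreedyStep A y r (w t) i (w (t + 1))) :
    IsCircuitWalk A (stdPolyhedron A b) fun t : Fin (T + 1) => w t := by
  refine ⟨fun t => hw t, fun t => ?_⟩
  obtain ⟨i, hi⟩ := hstep t t.isLt
  exact ⟨w (t + 1) - w t, hi.sub_mem_elemVecs, (add_sub_cancel _ _).symm,
    fun ε hε => hi.add_smul_notMem_stdPolyhedron hε⟩

end GreedyRun

section DiameterBound

theorem two_mul_add_mul_log_le {N d : ℕ} {κ : ℝ} (hd : 1 ≤ d) (hdN : d ≤ N) (hκ : 1 ≤ κ) :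
    2 * N + N * (d * Real.log (N * (d : ℝ) ^ 2 * κ ^ 2)) ≤ 8 * N * d * Real.log (N + κ) := by
  have hd' : (1 : ℝ) ≤ d := Nat.one_le_cast.mpr hd
  have hdN' : (d : ℝ) ≤ N := Nat.cast_le.mpr hdN
  have hd0 : (0 : ℝ) < d := by linarith
  have hN0 : (0 : ℝ) < N := by linarith
  have hκ0 : 0 < κ := by linarith
  have hs : 2 ≤ N + κ := by linarith
  have hlog : 2 / 3 ≤ Real.log (N + κ) :=
    le_trans (by linarith [Real.log_two_gt_d9]) (Real.log_le_log two_pos hs)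
  have hpow : N * (d : ℝ) ^ 2 * κ ^ 2 ≤ (N + κ) ^ 5 :=
    calc N * (d : ℝ) ^ 2 * κ ^ 2 ≤ (N + κ) * (N + κ) ^ 2 * (N + κ) ^ 2 := by gcongr <;> linarith
      _ = (N + κ) ^ 5 := by ring
  have hlogpow : Real.log (N * (d : ℝ) ^ 2 * κ ^ 2) ≤ 5 * Real.log (N + κ) := by
    have := Real.log_le_log (mul_pos (mul_pos hN0 (pow_pos hd0 2)) (pow_pos hκ0 2)) hpow
    rwa [Real.log_pow, Nat.cast_ofNat] at this
  have htwo : 2 ≤ d * (3 * Real.log (N + κ)) :=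
    (by linarith : 2 ≤ 3 * Real.log (N + κ)).trans (le_mul_of_one_le_left (by linarith) hd')
  calc 2 * N + N * (d * Real.log (N * (d : ℝ) ^ 2 * κ ^ 2))
      = N * (2 + d * Real.log (N * (d : ℝ) ^ 2 * κ ^ 2)) := by ring
    _ ≤ N * (d * (3 * Real.log (N + κ)) + d * (5 * Real.log (N + κ))) := by gcongr
    _ = 8 * N * d * Real.log (N + κ) := by ring

theorem natCast_mul_log_nonneg (N : ℕ) {κ : ℝ} (hκ : 0 ≤ κ) : 0 ≤ N * Real.log (N + κ) := by
  rcases N.eq_zero_or_pos with rfl | hN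
  · simp
  · have hN' : (1 : ℝ) ≤ N := Nat.one_le_cast.mpr hN
    exact mul_nonneg N.cast_nonneg (Real.log_nonneg (by linarith))

variable {α β : Type} [Fintype α] [Fintype β] {A : Matrix α β ℝ} {b : α → ℝ} {x y : β → ℝ}

theorem exists_greedy_sequence (hx : x ∈ stdPolyhedron A b)
    (hy : y ∈ (stdPolyhedron A b).extremePoints ℝ) {d : ℕ}
    (hd : finrank ℝ (kerOn A (support x ∪ support y)) ≤ d) :
    ∃ w : ℕ → β → ℝ, w 0 = x ∧ (∀ t, w t ∈ stdPolyhedron A b) ∧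
      (∀ t, support (w t) ⊆ support x ∪ support y) ∧
      ∀ t, w t ≠ y → ∃ i, IsGreedyStep A y d (w t) i (w (t + 1)) := by
  have hnext (u : {u // u ∈ stdPolyhedron A b ∧ support u ⊆ support x ∪ support y}) :
      ∃ v : {u // u ∈ stdPolyhedron A b ∧ support u ⊆ support x ∪ support y},
        u.1 ≠ y → ∃ i, IsGreedyStep A y d u.1 i v.1 := by
    obtain ⟨u, hu, hsupp⟩ := u
    by_cases huy : u = y
    · exact ⟨⟨u, hu, hsupp⟩, fun h => absurd huy h⟩
    have hyu : support (y - u) ⊆ support x ∪ support y :=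
      (support_sub y u).trans (Set.union_subset Set.subset_union_right hsupp)
    obtain ⟨i, v, hv⟩ :=
      exists_isGreedyStep hy hu huy ((Submodule.finrank_mono (kerOn_mono hyu)).trans hd)
    exact ⟨⟨v, hv.mem_stdPolyhedron hu, hv.support_subset hsupp Set.subset_union_right⟩,
      fun _ => ⟨i, hv⟩⟩
  choose next hnext using hnext
  let w (t : ℕ) := next^[t] ⟨x, hx, Set.subset_union_left⟩
  refine ⟨fun t => (w t).1, rfl, fun t => (w t).2.1, fun t => (w t).2.2, fun t ht => ?_⟩
  simp only [w, iterate_succ_apply']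
  exact hnext (w t) ht

theorem length_le_rank_mul_min_mul_log (hx : x ∈ (stdPolyhedron A b).extremePoints ℝ)
    (hy : y ∈ (stdPolyhedron A b).extremePoints ℝ) {w : ℕ → β → ℝ}
    (hw : ∀ t, w t ∈ stdPolyhedron A b) (hU : ∀ t, support (w t) ⊆ support x ∪ support y) {T : ℕ}
    (hstep : ∀ t < T, ∃ i, IsGreedyStep A y (min A.rank (Fintype.card β - A.rank) : ℕ)
      (w t) i (w (t + 1))) :
    (T : ℝ) ≤ 8 * A.rank * (min A.rank (Fintype.card β - A.rank) : ℕ) *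
      Real.log (A.rank + circImb A) := by
  set d := min A.rank (Fintype.card β - A.rank)
  rcases T.eq_zero_or_pos with rfl | hT
  · have hlog := mul_nonneg d.cast_nonneg (natCast_mul_log_nonneg A.rank (circImb_nonneg A))
    push_cast
    linarith
  obtain ⟨i₀, hi₀⟩ := hstep 0 hT
  have : Nonempty β := ⟨i₀⟩
  choose! i hi using hstep
  have hd1 : 1 ≤ d := Nat.cast_pos.mp hi₀.ratio_pos
  have hdN : d ≤ A.rank := min_le_left _ _
  have hκ : 1 ≤ circImb A := one_le_circImb hi₀.sub_mem_elemVecs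
  exact (length_le_of_greedySteps (Nat.one_le_cast.mpr hd1) hκ (hd1.trans hdN) hy hw hi hU
    (ncard_support_le_rank hx) (ncard_support_le_rank hy)).trans (two_mul_add_mul_log_le hd1 hdN hκ)

theorem circuit_diameter_bound_general (hx : x ∈ (stdPolyhedron A b).extremePoints ℝ)
    (hy : y ∈ (stdPolyhedron A b).extremePoints ℝ) :
    ∃ (k : ℕ) (w : Fin (k + 1) → β → ℝ),
      IsCircuitWalk A (stdPolyhedron A b) w ∧ w 0 = x ∧ w (Fin.last k) = y ∧
      (k : ℝ) ≤ 8 * A.rank * (min A.rank (Fintype.card β - A.rank) : ℕ) *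
        Real.log (A.rank + circImb A) := by
  obtain ⟨w, hw0, hw, hU, hstep⟩ :=
    exists_greedy_sequence hx.1 hy (finrank_kerOn_support_union_le hx hy)
  have hreach : ∃ t, w t = y := by
    by_contra! hne
    obtain ⟨T, hT⟩ := exists_nat_gt (8 * A.rank * (min A.rank (Fintype.card β - A.rank) : ℕ) *
      Real.log (A.rank + circImb A))
    exact hT.not_ge (length_le_rank_mul_min_mul_log hx hy hw hU fun t _ => hstep t (hne t))
  have hstep' (t : ℕ) (ht : t < Nat.find hreach) := hstep t (Nat.find_min hreach ht)
  exact ⟨Nat.find hreach, fun t => w t, isCircuitWalk_of_greedySteps hw hstep', hw0,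
    Nat.find_spec hreach, length_le_rank_mul_min_mul_log hx hy hw hU hstep'⟩

end DiameterBound

theorem circuit_diameter_bound :
    ∃ C : ℝ, 0 < C ∧
      ∀ (m n : ℕ) (A : Matrix (Fin m) (Fin n) ℝ) (b : Fin m → ℝ),
        A.rank = m →
        ∀ x y : Fin n → ℝ,
          x ∈ Set.extremePoints ℝ {z : Fin n → ℝ | A.mulVec z = b ∧ 0 ≤ z} →
          y ∈ Set.extremePoints ℝ {z : Fin n → ℝ | A.mulVec z = b ∧ 0 ≤ z} →
          ∃ (k : ℕ) (w : Fin (k + 1) → Fin n → ℝ),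
            IsCircuitWalk A {z : Fin n → ℝ | A.mulVec z = b ∧ 0 ≤ z} w ∧
            w 0 = x ∧ w (Fin.last k) = y ∧
            (k : ℝ) ≤ C * (m : ℝ) * ((min m (n - m) : ℕ) : ℝ) *
              Real.log ((m : ℝ) + circImb A) := by
  refine ⟨8, by norm_num, fun m n A b hA x y hx hy => ?_⟩
  simpa only [hA, Fintype.card_fin, stdPolyhedron] using circuit_diameter_bound_general hx hy
end
end

section
/- Let A ∈ ℝ^{m×n} have rank m and let P_u = {x ∈ ℝⁿ : Ax = b, 0 ≤ x ≤ u} for some b ∈ ℝ^m and u ∈ ℝⁿ with u > 0. Then there is an absolute constant C > 0 (independent of m, n, A, b, u) such that the circuit diameter of P_u is at most C · n² · log(n + κ_A). -/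
open Matrix
open scoped BigOperators

noncomputable section
open Classical

/-!
Slack variables turn `P_u` into a polyhedron in standard form on `2n` coordinates, whose elementary
vectors are the `(g, -g)` with `g` elementary for `A`; so it suffices to walk, in standard form,
from a point `x` to a vertex `z`. Write `N = {i | z i = 0}`, let `n` be the number of coordinates
and `κ` the circuit imbalance.

Decompose `z - x` conformally into at most `n` elementary vectors, and follow, as far as possible,
the one carrying the largest share of the excess `‖x_N‖₁`. Each such step shrinks the excess by a
factor `1 - 1/n` and has length between `1` and `n` times the chosen vector, so that a coordinate
with `x i ≤ n * z i` keeps this property. Let `i` be the coordinate that blocks the step. Either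
`x i > n * z i`, which happens at most once for each `i`, because `x i` drops to `0`; or
`x i ≤ n * z i`, and then `z i` and the excess agree up to constant powers of `n` and `κ`: the
excess is at most `n³ κ * z i` by the choice of the elementary vector, and `z i ≤ κ * ‖x_N‖₁`
because the step ends at a point `y` with `y i = 0`, and `|z i - y i| ≤ κ * ‖y_N‖₁` for every point
`y` of the polyhedron. By the geometric decay, this second case occurs `O(n log (n κ))` times for
each `i`.
-/

namespace CircuitDiameter

open Function Finset

section Conformal

variable {ι : Type*}

/-- `h` conforms to `w`: each coordinate of `h` lies between `0` and the corresponding coordinate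
of `w`. Equivalently, `h` and `w - h` are both sign-compatible with `w`. -/
def IsConformal (h w : ι → ℝ) : Prop :=
  ∀ i, h i ∈ Set.uIcc 0 (w i)

lemma IsConformal.trans_sub {g h w : ι → ℝ} (hg : IsConformal g (w - h)) (hh : IsConformal h w) :
    IsConformal g w := by
  intro i
  have hgi := hg i
  have hhi := hh i
  simp only [Set.mem_uIcc, Pi.sub_apply] at hgi hhi ⊢
  grind

lemma IsConformal.support_subset {h w : ι → ℝ} (hh : IsConformal h w) :
    support h ⊆ support w := by
  intro i hi hwi
  have hhi := hh i
  rw [hwi, Set.uIcc_self] at hhi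
  exact hi hhi

lemma IsConformal.le_of_neg {h w : ι → ℝ} (hh : IsConformal h w) {i : ι} (hi : h i < 0) :
    w i ≤ h i :=
  ((Set.mem_uIcc.1 (hh i)).resolve_left fun hc ↦ hi.not_ge hc.1).1

lemma IsConformal.le_of_pos {h w : ι → ℝ} (hh : IsConformal h w) {i : ι} (hi : 0 < h i) :
    h i ≤ w i :=
  ((Set.mem_uIcc.1 (hh i)).resolve_right fun hc ↦ hi.not_ge hc.2).2

lemma abs_sum_apply_of_isConformal {κ : Type*} {s : Finset κ} {h : κ → ι → ℝ} {w : ι → ℝ}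
    (hh : ∀ t ∈ s, IsConformal (h t) w) (i : ι) : |(∑ t ∈ s, h t) i| = ∑ t ∈ s, |h t i| := by
  rw [Finset.sum_apply]
  rcases le_total 0 (w i) with hwi | hwi
  · have hnonneg : ∀ t ∈ s, 0 ≤ h t i := fun t ht ↦ by
      have := hh t ht i
      rw [Set.uIcc_of_le hwi] at this
      exact this.1
    rw [abs_sum_of_nonneg hnonneg, sum_congr rfl fun t ht ↦ abs_of_nonneg (hnonneg t ht)]
  · have hnonpos : ∀ t ∈ s, h t i ≤ 0 := fun t ht ↦ by
      have := hh t ht i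
      rw [Set.uIcc_of_ge hwi] at this
      exact this.2
    rw [abs_of_nonpos (sum_nonpos hnonpos), ← sum_neg_distrib,
      sum_congr rfl fun t ht ↦ abs_of_nonpos (hnonpos t ht)]

lemma support_sub_smul_ssubset {g h : ι → ℝ} {t : ℝ} (hsub : support h ⊆ support g) {i : ι}
    (hi : h i ≠ 0) (hgi : g i = t * h i) : support (g - t • h) ⊂ support g := by
  refine ⟨fun j hj hgj ↦ hj ?_, fun hsup ↦ hsup (hsub hi) (by simp [hgi])⟩
  have hhj : h j = 0 := notMem_support.1 fun hhj ↦ hsub hhj hgj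
  simp [hgj, hhj]

lemma step_apply_le_mul {x z h : ι → ℝ} {τ c : ℝ} (hτ : 1 ≤ τ) (hτc : τ ≤ c) (hx : 0 ≤ x)
    (hh : IsConformal h (z - x)) {i : ι} (hi : x i ≤ c * z i) : (x + τ • h) i ≤ c * z i := by
  change x i + τ * h i ≤ c * z i
  rcases le_or_gt (h i) 0 with hneg | hpos
  · linarith [mul_nonpos_of_nonneg_of_nonpos (zero_le_one.trans hτ) hneg]
  · have hxi : 0 ≤ x i := hx i
    have hstep : τ * h i ≤ c * (z i - x i) :=
      mul_le_mul hτc (hh.le_of_pos hpos) hpos.le (by linarith)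
    nlinarith

variable [Finite ι]

lemma exists_ratio_test {v g : ι → ℝ} (hpos : ∃ i, 0 < g i * v i) :
    ∃ t : ℝ, 0 < t ∧ (∀ i, 0 ≤ (v i - t * g i) * v i) ∧ ∃ i, g i ≠ 0 ∧ v i = t * g i := by
  cases nonempty_fintype ι
  obtain ⟨i, hi, hmin⟩ := exists_min_image {i | 0 < g i * v i} (fun i ↦ v i / g i)
    (by simpa [Finset.Nonempty] using hpos)
  simp only [mem_filter, mem_univ, true_and] at hi hmin
  have hgi : g i ≠ 0 := left_ne_zero_of_mul hi.ne'
  have hratio : 0 < v i / g i := by rwa [div_pos_iff, ← mul_pos_iff, mul_comm]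
  refine ⟨v i / g i, hratio, fun j ↦ ?_, i, hgi, (div_mul_cancel₀ _ hgi).symm⟩
  by_cases hj : 0 < g j * v j
  · have hgj : g j ≠ 0 := left_ne_zero_of_mul hj.ne'
    calc 0 ≤ (v j / g j - v i / g i) * (g j * v j) :=
          mul_nonneg (sub_nonneg.2 (hmin j hj)) hj.le
      _ = (v j - v i / g i * g j) * v j := by field_simp
  · nlinarith [mul_nonneg hratio.le (neg_nonneg.2 (not_lt.1 hj)), mul_self_nonneg (v j)]

lemma exists_smul_isConformal {g w : ι → ℝ} (hg : g ≠ 0) (hsub : support g ⊆ support w)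
    (hsign : ∀ i, 0 ≤ g i * w i) :
    ∃ t : ℝ, 0 < t ∧ IsConformal (t • g) w ∧ ∃ i, g i ≠ 0 ∧ w i = t * g i := by
  obtain ⟨i, hi⟩ := support_nonempty_iff.2 hg
  obtain ⟨t, ht, hrem, htight⟩ :=
    exists_ratio_test ⟨i, (hsign i).lt_of_ne' (mul_ne_zero hi (hsub hi))⟩
  refine ⟨t, ht, fun j ↦ ?_, htight⟩
  have hremj := hrem j
  have htg : 0 ≤ t * g j * w j := by rw [mul_assoc]; exact mul_nonneg ht.le (hsign j)
  rw [Pi.smul_apply, smul_eq_mul]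
  rcases lt_trichotomy (w j) 0 with hw | hw | hw
  · rw [Set.uIcc_of_ge hw.le]
    exact ⟨by nlinarith, nonpos_of_mul_nonneg_left htg hw⟩
  · simp [hw, notMem_support.1 fun hgj ↦ hsub hgj hw]
  · rw [Set.uIcc_of_le hw.le]
    exact ⟨nonneg_of_mul_nonneg_left htg hw, by nlinarith⟩

lemma exists_maximal_step {x z h : ι → ℝ} (hz : 0 ≤ z) (hx : 0 ≤ x)
    (hh : IsConformal h (z - x)) (hneg : ∃ i, h i < 0) :
    ∃ τ : ℝ, 1 ≤ τ ∧ 0 ≤ x + τ • h ∧ ∃ i, h i < 0 ∧ x i + τ * h i = 0 := by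
  have hxh : ∀ i, h i < 0 → z i - h i ≤ x i := fun i hi ↦ by
    linarith [hh.le_of_neg hi, Pi.sub_apply z x i]
  have hxpos : ∀ i, h i < 0 → 0 < x i := fun i hi ↦ by
    linarith [hxh i hi, show 0 ≤ z i from hz i]
  obtain ⟨i₀, hi₀⟩ := hneg
  obtain ⟨τ, hτ, hrem, i, hi, hxi⟩ := exists_ratio_test (v := x) (g := -h)
    ⟨i₀, mul_pos (neg_pos.2 hi₀) (hxpos i₀ hi₀)⟩
  simp only [Pi.neg_apply, mul_neg, sub_neg_eq_add, neg_ne_zero] at hrem hi hxi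
  have hineg : h i < 0 := by
    refine (not_lt.1 fun hpos ↦ ?_).lt_of_ne hi
    linarith [mul_pos hτ hpos, show 0 ≤ x i from hx i]
  refine ⟨τ, ?_, fun j ↦ ?_, i, hineg, by linarith⟩
  · nlinarith [hxh i hineg, show 0 ≤ z i from hz i]
  · change 0 ≤ x j + τ * h j
    by_cases hj : h j < 0
    · exact nonneg_of_mul_nonneg_left (hrem j) (hxpos j hj)
    · exact add_nonneg (hx j) (mul_nonneg hτ.le (not_lt.1 hj))

end Conformal

section ElementaryVectors

variable {α β : Type} [Fintype α] [Fintype β] {A : Matrix α β ℝ} {g h w : β → ℝ}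

lemma smul_mem_elemVecs (hg : g ∈ elemVecs A) {t : ℝ} (ht : t ≠ 0) : t • g ∈ elemVecs A := by
  obtain ⟨hker, hne, hmin⟩ := hg
  refine ⟨by rw [mulVec_smul, hker, smul_zero], smul_ne_zero ht hne, ?_⟩
  have hsupp : {i | (t • g) i ≠ 0} = {i | g i ≠ 0} := support_const_smul_of_ne_zero t g ht
  rwa [hsupp]

lemma eq_smul_of_mem_elemVecs (hg : g ∈ elemVecs A) (hh : A *ᵥ h = 0)
    (hsub : support h ⊆ support g) {i : β} (hi : h i ≠ 0) : g = (g i / h i) • h := by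
  by_contra hne
  refine hg.2.2 (g - (g i / h i) • h) ?_ (sub_ne_zero.2 hne)
    (support_sub_smul_ssubset hsub hi (div_mul_cancel₀ _ hi).symm)
  rw [mulVec_sub, mulVec_smul, hg.1, hh, smul_zero, sub_zero]

lemma mem_elemVecs_of_minimal_sign_compatible
    (hg : MinimalFor (fun g ↦ A *ᵥ g = 0 ∧ g ≠ 0 ∧ support g ⊆ support w ∧ ∀ i, 0 ≤ g i * w i)
      support g) : g ∈ elemVecs A := by
  obtain ⟨⟨hker, hne, hsub, hsign⟩, hmin⟩ := hg
  refine ⟨hker, hne, fun h hh hh0 hhg ↦ ?_⟩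
  change support h ⊂ support g at hhg
  wlog hpos : ∃ i, 0 < h i * g i generalizing h
  · obtain ⟨i, hi⟩ := support_nonempty_iff.2 hh0
    have hprod : h i * g i < 0 :=
      (not_lt.1 fun hlt ↦ hpos ⟨i, hlt⟩).lt_of_ne (mul_ne_zero hi (hhg.1 hi))
    exact this (-h) (by rw [mulVec_neg, hh, neg_zero]) (neg_ne_zero.2 hh0)
      (by rwa [support_neg]) ⟨i, by simpa using hprod⟩
  obtain ⟨t, -, hrem, i, hi, hgi⟩ := exists_ratio_test hpos
  have hlt : support (g - t • h) ⊂ support g := support_sub_smul_ssubset hhg.1 hi hgi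
  refine hlt.2 (hmin ⟨?_, ?_, hlt.1.trans hsub, fun j ↦ ?_⟩ hlt.1)
  · rw [mulVec_sub, mulVec_smul, hker, hh, smul_zero, sub_zero]
  · obtain ⟨j, hgj, hhj⟩ := Set.exists_of_ssubset hhg
    intro hzero
    have hj := congrFun hzero j
    simp only [Pi.sub_apply, Pi.smul_apply, notMem_support.1 hhj, smul_zero, sub_zero] at hj
    exact hgj hj
  · by_cases hgj : g j = 0
    · simp [hgj, notMem_support.1 fun hhj ↦ hhg.1 hhj hgj]
    · have hprod : 0 ≤ g j ^ 2 * ((g - t • h) j * w j) :=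
        calc 0 ≤ ((g j - t * h j) * g j) * (g j * w j) := mul_nonneg (hrem j) (hsign j)
          _ = g j ^ 2 * ((g - t • h) j * w j) := by
            rw [Pi.sub_apply, Pi.smul_apply, smul_eq_mul]; ring
      exact nonneg_of_mul_nonneg_right hprod (by positivity)

lemma exists_mem_elemVecs_isConformal (hw : A *ᵥ w = 0) (hw0 : w ≠ 0) :
    ∃ h ∈ elemVecs A, IsConformal h w ∧ ∃ i, h i ≠ 0 ∧ w i = h i := by
  obtain ⟨g, hg⟩ := exists_minimalFor_of_wellFoundedLT
    (fun g ↦ A *ᵥ g = 0 ∧ g ≠ 0 ∧ support g ⊆ support w ∧ ∀ i, 0 ≤ g i * w i) support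
    ⟨w, hw, hw0, Set.Subset.rfl, fun i ↦ mul_self_nonneg _⟩
  obtain ⟨t, ht, hconf, i, hi, hwi⟩ := exists_smul_isConformal hg.1.2.1 hg.1.2.2.1 hg.1.2.2.2
  exact ⟨t • g, smul_mem_elemVecs (mem_elemVecs_of_minimal_sign_compatible hg) ht.ne', hconf, i,
    mul_ne_zero ht.ne' hi, hwi⟩

theorem exists_conformal_decomposition (hw : A *ᵥ w = 0) :
    ∃ (k : ℕ) (h : Fin k → β → ℝ), k ≤ (support w).ncard ∧
      (∀ t, h t ∈ elemVecs A ∧ IsConformal (h t) w) ∧ ∑ t, h t = w := by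
  induction hn : (support w).ncard using Nat.strong_induction_on generalizing w with
  | _ n ih =>
    subst hn
    by_cases hw0 : w = 0
    · exact ⟨0, Fin.elim0, by simp, fun t ↦ t.elim0, by simp [hw0]⟩
    obtain ⟨h₀, helem, hconf, i, hi, hwi⟩ := exists_mem_elemVecs_isConformal hw hw0
    have hlt : (support (w - h₀)).ncard < (support w).ncard := Set.ncard_lt_ncard <| by
      simpa using support_sub_smul_ssubset (t := 1) hconf.support_subset hi (by simpa using hwi)
    obtain ⟨k, h, hk, hh, hsum⟩ :=
      ih _ hlt (by rw [mulVec_sub, hw, helem.1, sub_zero]) rfl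
    refine ⟨k + 1, Fin.cons h₀ h, by omega, ?_, ?_⟩
    · exact Fin.cases ⟨helem, hconf⟩ fun t ↦ ⟨(hh t).1, (hh t).2.trans_sub hconf⟩
    · simp [Fin.sum_univ_succ, hsum]

lemma exists_mem_elemVecs_sum_abs_le (hw : A *ᵥ w = 0) (hw0 : w ≠ 0) (N : Finset β) :
    ∃ h ∈ elemVecs A, IsConformal h w ∧
      ∑ j ∈ N, |w j| ≤ Fintype.card β * ∑ j ∈ N, |h j| := by
  obtain ⟨k, h, hk, hh, hsum⟩ := exists_conformal_decomposition hw
  have hk0 : k ≠ 0 := by rintro rfl; exact hw0 (by simpa using hsum.symm)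
  have hkcard : (k : ℝ) ≤ Fintype.card β := by
    exact_mod_cast hk.trans ((Set.ncard_le_card _).trans_eq Nat.card_eq_fintype_card)
  obtain ⟨t, -, hmax⟩ := exists_max_image univ (fun t ↦ ∑ j ∈ N, |h t j|)
    ⟨⟨0, Nat.pos_of_ne_zero hk0⟩, mem_univ _⟩
  refine ⟨h t, (hh t).1, (hh t).2, ?_⟩
  calc ∑ j ∈ N, |w j| = ∑ j ∈ N, ∑ s, |h s j| := sum_congr rfl fun j _ ↦ by
        conv_lhs => rw [← hsum]
        exact abs_sum_apply_of_isConformal (fun s _ ↦ (hh s).2) j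
    _ = ∑ s, ∑ j ∈ N, |h s j| := sum_comm
    _ ≤ ∑ _s : Fin k, ∑ j ∈ N, |h t j| := sum_le_sum hmax
    _ = k * ∑ j ∈ N, |h t j| := by simp
    _ ≤ Fintype.card β * ∑ j ∈ N, |h t j| := by gcongr

end ElementaryVectors

section CircuitImbalance

variable {α β : Type} [Fintype α] [Fintype β] {A : Matrix α β ℝ} {g w : β → ℝ}

lemma abs_div_abs_eq_of_support_eq {h : β → ℝ} (hg : g ∈ elemVecs A) (hh : h ∈ elemVecs A)
    (hsupp : support g = support h) {i : β} (hi : g i ≠ 0) (j : β) :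
    |g j| / |g i| = |h j| / |h i| := by
  have hhi : h i ≠ 0 := hsupp.le hi
  rw [eq_smul_of_mem_elemVecs hh hg.1 hsupp.le hi]
  simp only [Pi.smul_apply, smul_eq_mul, abs_mul]
  exact (mul_div_mul_left _ _ (abs_ne_zero.2 (div_ne_zero hhi hi))).symm

variable (A) in
lemma bddAbove_circuit_ratios :
    BddAbove {r : ℝ | ∃ g ∈ elemVecs A, ∃ i j, g i ≠ 0 ∧ g j ≠ 0 ∧ r = |g j| / |g i|} := by
  let ratios : Set β × β × β → Set ℝ := fun p ↦
    {r | ∃ g ∈ elemVecs A, support g = p.1 ∧ g p.2.1 ≠ 0 ∧ r = |g p.2.2| / |g p.2.1|}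
  have hratios (p : Set β × β × β) : (ratios p).Subsingleton := by
    rintro _ ⟨g, hg, hgp, hgi, rfl⟩ _ ⟨h, hh, hhp, -, rfl⟩
    exact abs_div_abs_eq_of_support_eq hg hh (hgp.trans hhp.symm) hgi _
  refine ((Set.finite_iUnion fun p ↦ (hratios p).finite).subset ?_).bddAbove
  rintro _ ⟨g, hg, i, j, hi, -, rfl⟩
  exact Set.mem_iUnion.2 ⟨(support g, i, j), g, hg, rfl, hi, rfl⟩

variable (A) in
lemma circImb_nonneg : 0 ≤ circImb A := by
  refine Real.sSup_nonneg ?_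
  rintro _ ⟨g, -, i, j, -, -, rfl⟩
  positivity

lemma abs_le_circImb_mul_abs (hg : g ∈ elemVecs A) {i : β} (hi : g i ≠ 0) (j : β) :
    |g j| ≤ circImb A * |g i| := by
  by_cases hj : g j = 0
  · rw [hj, abs_zero]
    exact mul_nonneg (circImb_nonneg A) (abs_nonneg _)
  · rw [← div_le_iff₀ (abs_pos.2 hi)]
    exact le_csSup (bddAbove_circuit_ratios A) ⟨g, hg, i, j, hi, hj, rfl⟩

lemma one_le_circImb (hw : A *ᵥ w = 0) (hw0 : w ≠ 0) : 1 ≤ circImb A := by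
  obtain ⟨g, hg, -, i, hi, -⟩ := exists_mem_elemVecs_isConformal hw hw0
  exact le_of_mul_le_mul_right (by simpa using abs_le_circImb_mul_abs hg hi i) (abs_pos.2 hi)

end CircuitImbalance

section Excess

variable {β : Type*} [Fintype β] {z x h : β → ℝ}

/-- The total weight of `x` on the coordinates where the target vertex `z` vanishes, written
`‖x_N‖₁` for `N = {i | z i = 0}` and `x ≥ 0`. It measures how far `x` is from `z`. -/
def excess (z x : β → ℝ) : ℝ :=
  ∑ i with z i = 0, x i

lemma excess_add_smul (z x h : β → ℝ) (τ : ℝ) :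
    excess z (x + τ • h) = excess z x + τ * excess z h := by
  simp [excess, sum_add_distrib, mul_sum]

lemma excess_nonneg (hx : 0 ≤ x) : 0 ≤ excess z x :=
  sum_nonneg fun i _ ↦ hx i

lemma sum_abs_eq_neg_excess (hx : 0 ≤ x) (hh : IsConformal h (z - x)) :
    ∑ i with z i = 0, |h i| = -excess z h := by
  rw [excess, ← sum_neg_distrib]
  refine sum_congr rfl fun i hi ↦ abs_of_nonpos ?_
  have hzi : z i = 0 := by simpa using hi
  have hxi : 0 ≤ x i := hx i
  have hhi := hh i
  rw [Pi.sub_apply, hzi, zero_sub, Set.uIcc_of_ge (neg_nonpos.2 hxi)] at hhi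
  exact hhi.2

lemma sum_abs_sub_eq_excess (hx : 0 ≤ x) : ∑ i with z i = 0, |(z - x) i| = excess z x :=
  sum_congr rfl fun i hi ↦ by
    have hzi : z i = 0 := by simpa using hi
    simp [hzi, abs_of_nonneg (hx i)]

lemma step_length_le {τ c : ℝ} (hneg : excess z h < 0) (hsteep : excess z x ≤ c * -excess z h)
    (hnonneg : 0 ≤ x + τ • h) : τ ≤ c := by
  have hy : 0 ≤ excess z (x + τ • h) := excess_nonneg hnonneg
  rw [excess_add_smul] at hy
  exact le_of_mul_le_mul_right (by linarith) (neg_pos.2 hneg)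

lemma excess_step_le {τ c : ℝ} (hc : 0 < c) (hτ : 1 ≤ τ) (hx : 0 ≤ x) (hneg : excess z h < 0)
    (hsteep : excess z x ≤ c * -excess z h) :
    excess z (x + τ • h) ≤ Real.exp (-c⁻¹) * excess z x :=
  calc excess z (x + τ • h) = excess z x + τ * excess z h := excess_add_smul z x h τ
    _ ≤ excess z x + excess z h := by nlinarith
    _ ≤ (1 - c⁻¹) * excess z x := by
      have := (inv_mul_le_iff₀ hc).2 hsteep
      linarith
    _ ≤ Real.exp (-c⁻¹) * excess z x := by
      gcongr
      · exact excess_nonneg hx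
      · exact Real.one_sub_le_exp_neg _

end Excess

section Counting

variable {β : Type*} [Fintype β] {z : β → ℝ} {c κ : ℝ}

/-- The progress made towards the vertex `z` by one step from `x` to `y`. The excess decays
geometrically, a coordinate once bounded by `c * z` stays so, and some coordinate either becomes
bounded by `c * z` or has its value in `z` comparable to the excess of `x`. -/
structure IsProgress (c κ : ℝ) (z x y : β → ℝ) : Prop where
  excess_le : excess z y ≤ Real.exp (-c⁻¹) * excess z x
  le_mul_of_le_mul : ∀ i, x i ≤ c * z i → y i ≤ c * z i
  exists_blocking : ∃ i, (c * z i < x i ∧ y i ≤ c * z i) ∨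
    (0 < z i ∧ z i ≤ κ * excess z x ∧ excess z x ≤ c ^ 3 * κ * z i)

lemma le_exp_mul_of_exp_decay {f : ℕ → ℝ} {k : ℕ}
    (hf : ∀ t < k, f (t + 1) ≤ Real.exp (-c⁻¹) * f t) {s d : ℕ} (hsd : s + d ≤ k) :
    f (s + d) ≤ Real.exp (-(d / c)) * f s := by
  induction d with
  | zero => simp
  | succ d ih =>
    calc f (s + d + 1) ≤ Real.exp (-c⁻¹) * f (s + d) := hf _ (by omega)
      _ ≤ Real.exp (-c⁻¹) * (Real.exp (-(d / c)) * f s) := by gcongr; exact ih (by omega)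
      _ = Real.exp (-((d + 1 : ℕ) / c)) * f s := by
        rw [← mul_assoc, ← Real.exp_add]
        push_cast
        ring_nf

lemma card_le_of_exp_decay {f : ℕ → ℝ} {k : ℕ} {a R : ℝ} (hc : 0 < c) (ha : 0 < a) (hR : 1 ≤ R)
    (hf : ∀ t < k, f (t + 1) ≤ Real.exp (-c⁻¹) * f t) {S : Finset ℕ}
    (hS : ∀ t ∈ S, t < k ∧ f t ∈ Set.Icc a (R * a)) : (#S : ℝ) ≤ 1 + c * Real.log R := by
  rcases S.eq_empty_or_nonempty with rfl | hne
  · have := mul_nonneg hc.le (Real.log_nonneg hR)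
    simpa using by linarith
  obtain ⟨d, hd⟩ := Nat.exists_eq_add_of_le (S.min'_le _ (S.max'_mem hne))
  have hcard : #S ≤ d + 1 :=
    calc #S ≤ #(Icc (S.min' hne) (S.max' hne)) :=
          card_le_card fun t ht ↦ mem_Icc.2 ⟨S.min'_le t ht, S.le_max' t ht⟩
      _ = d + 1 := by rw [Nat.card_Icc, hd]; omega
  have hmax := hS _ (S.max'_mem hne)
  have hwindow : a ≤ Real.exp (-(d / c)) * (R * a) :=
    calc a ≤ f (S.min' hne + d) := hd ▸ hmax.2.1
      _ ≤ Real.exp (-(d / c)) * f (S.min' hne) := le_exp_mul_of_exp_decay hf (hd ▸ hmax.1.le)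
      _ ≤ Real.exp (-(d / c)) * (R * a) := by gcongr; exact (hS _ (S.min'_mem hne)).2.2
  have hexp : Real.exp (d / c) ≤ R := by
    rw [Real.exp_neg, inv_mul_eq_div, le_div_iff₀ (Real.exp_pos _), mul_comm] at hwindow
    exact le_of_mul_le_mul_right hwindow ha
  have hdc : d ≤ c * Real.log R := by
    rw [← div_le_iff₀' hc]
    exact (Real.le_log_iff_exp_le (by linarith)).2 hexp
  have hcard' : (#S : ℝ) ≤ d + 1 := by exact_mod_cast hcard
  linarith

variable {p : ℕ → β → ℝ} {k : ℕ}

lemma le_mul_of_le_mul_of_le (hp : ∀ t < k, IsProgress c κ z (p t) (p (t + 1))) {i : β} {s t : ℕ}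
    (hst : s ≤ t) (htk : t ≤ k) (hs : p s i ≤ c * z i) : p t i ≤ c * z i := by
  induction t, hst using Nat.le_induction with
  | base => exact hs
  | succ t _ ih => exact (hp t (by omega)).le_mul_of_le_mul i (ih (by omega))

lemma card_becomes_le_mul_le_one (hp : ∀ t < k, IsProgress c κ z (p t) (p (t + 1))) (i : β) :
    #{t ∈ range k | c * z i < p t i ∧ p (t + 1) i ≤ c * z i} ≤ 1 := by
  have hle : ∀ s t, t < k → p (s + 1) i ≤ c * z i → c * z i < p t i → t ≤ s :=
    fun s t htk hs ht ↦ not_lt.1 fun hst ↦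
      ht.not_ge (le_mul_of_le_mul_of_le hp hst htk.le hs)
  refine card_le_one.2 fun s hs t ht ↦ ?_
  simp only [mem_filter, mem_range] at hs ht
  exact le_antisymm (hle t s hs.1 ht.2.2 hs.2.1) (hle s t ht.1 hs.2.2 ht.2.1)

lemma card_comparable_le (hc : 1 ≤ c) (hκ : 1 ≤ κ)
    (hp : ∀ t < k, IsProgress c κ z (p t) (p (t + 1))) (i : β) :
    (#{t ∈ range k | 0 < z i ∧ z i ≤ κ * excess z (p t) ∧
      excess z (p t) ≤ c ^ 3 * κ * z i} : ℝ) ≤ 1 + c * Real.log (c ^ 3 * κ ^ 2) := by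
  have hR : 1 ≤ c ^ 3 * κ ^ 2 := one_le_mul_of_one_le_of_one_le (one_le_pow₀ hc) (one_le_pow₀ hκ)
  rcases le_or_gt (z i) 0 with hzi | hzi
  · have := mul_nonneg (zero_le_one.trans hc) (Real.log_nonneg hR)
    simpa [hzi.not_gt] using by linarith
  refine card_le_of_exp_decay (f := fun t ↦ excess z (p t)) (a := z i / κ) (by positivity)
    (by positivity) hR (fun t ht ↦ (hp t ht).excess_le) fun t ht ↦ ?_
  simp only [mem_filter, mem_range] at ht
  refine ⟨ht.1, (div_le_iff₀' (by positivity)).2 ht.2.2.1, ht.2.2.2.trans_eq ?_⟩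
  field_simp

theorem length_le_of_isProgress (hc : 1 ≤ c) (hκ : 1 ≤ κ)
    (hp : ∀ t < k, IsProgress c κ z (p t) (p (t + 1))) :
    (k : ℝ) ≤ Fintype.card β * (2 + c * Real.log (c ^ 3 * κ ^ 2)) := by
  let becomesSmall (i : β) : Finset ℕ := {t ∈ range k | c * z i < p t i ∧ p (t + 1) i ≤ c * z i}
  let comparable (i : β) : Finset ℕ :=
    {t ∈ range k | 0 < z i ∧ z i ≤ κ * excess z (p t) ∧ excess z (p t) ≤ c ^ 3 * κ * z i}
  have hcover : range k ⊆ univ.biUnion fun i ↦ becomesSmall i ∪ comparable i := fun t ht ↦ by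
    obtain ⟨i, hi⟩ := (hp t (mem_range.1 ht)).exists_blocking
    refine mem_biUnion.2 ⟨i, mem_univ i, mem_union.2 ?_⟩
    exact hi.imp (fun h ↦ mem_filter.2 ⟨ht, h⟩) (fun h ↦ mem_filter.2 ⟨ht, h⟩)
  have hcount : k ≤ ∑ i, (#(becomesSmall i) + #(comparable i)) :=
    calc k = #(range k) := (card_range k).symm
      _ ≤ ∑ i, #(becomesSmall i ∪ comparable i) := (card_le_card hcover).trans card_biUnion_le
      _ ≤ ∑ i, (#(becomesSmall i) + #(comparable i)) := sum_le_sum fun i _ ↦ card_union_le _ _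
  calc (k : ℝ) ≤ ∑ i, ((#(becomesSmall i) : ℝ) + #(comparable i)) := by exact_mod_cast hcount
    _ ≤ ∑ _i : β, (1 + (1 + c * Real.log (c ^ 3 * κ ^ 2))) := sum_le_sum fun i _ ↦
      add_le_add (by exact_mod_cast card_becomes_le_mul_le_one hp i) (card_comparable_le hc hκ hp i)
    _ = Fintype.card β * (2 + c * Real.log (c ^ 3 * κ ^ 2)) := by
      rw [sum_const, card_univ, nsmul_eq_mul]
      ring

lemma exists_chain_of_forall_length_le {X : Type*} {R : X → X → Prop} {goal : X} {B : ℝ}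
    (hnext : ∀ x ≠ goal, ∃ y, R x y)
    (hB : ∀ (k : ℕ) (p : ℕ → X), (∀ t < k, R (p t) (p (t + 1))) → (k : ℝ) ≤ B) (x : X) :
    ∃ (k : ℕ) (p : ℕ → X), p 0 = x ∧ p k = goal ∧ ∀ t < k, R (p t) (p (t + 1)) := by
  have hnext' (v : X) : ∃ y, v ≠ goal → R v y := by
    by_cases hv : v = goal
    · exact ⟨v, fun hne ↦ absurd hv hne⟩
    · exact (hnext v hv).imp fun _ hy _ ↦ hy
  choose next hnext' using hnext'
  have hstep (t : ℕ) (ht : next^[t] x ≠ goal) : R (next^[t] x) (next^[t + 1] x) := by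
    rw [iterate_succ_apply']
    exact hnext' _ ht
  have hreach : ∃ t, next^[t] x = goal := by
    by_contra! hnever
    obtain ⟨k, hk⟩ := exists_nat_gt B
    exact hk.not_ge (hB k (fun t ↦ next^[t] x) fun t _ ↦ hstep t (hnever t))
  exact ⟨Nat.find hreach, fun t ↦ next^[t] x, rfl, Nat.find_spec hreach,
    fun t ht ↦ hstep t (Nat.find_min hreach ht)⟩

end Counting

section StandardForm

variable {α β : Type} [Fintype β] {A : Matrix α β ℝ} {b : α → ℝ} {z x h : β → ℝ} {τ : ℝ}

/-- The polyhedron `{z | A z = b, 0 ≤ z}` in standard equality form. -/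
def standardPolyhedron (A : Matrix α β ℝ) (b : α → ℝ) : Set (β → ℝ) :=
  {z | A *ᵥ z = b ∧ 0 ≤ z}

/-- `z` is basic for `A`: the columns of `A` indexed by the support of `z` are linearly
independent. This is the algebraic form in which the argument uses that `z` is a vertex. -/
def IsBasic (A : Matrix α β ℝ) (z : β → ℝ) : Prop :=
  ∀ g, A *ᵥ g = 0 → support g ⊆ support z → g = 0

lemma exists_pos_forall_mul_abs_le {ι : Type*} [Finite ι] {z g : ι → ℝ} (hz : 0 ≤ z)
    (hsub : support g ⊆ support z) : ∃ δ > 0, ∀ i, δ * |g i| ≤ z i := by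
  have hsmall : ∀ i, ∀ᶠ δ in nhdsWithin (0 : ℝ) (Set.Ioi 0), δ * |g i| ≤ z i := by
    intro i
    by_cases hgi : g i = 0
    · simpa [hgi] using hz i
    · have hzi : 0 < z i := (hz i).lt_of_ne' (hsub hgi)
      have hgpos : 0 < |g i| := abs_pos.2 hgi
      filter_upwards [Ioo_mem_nhdsGT (div_pos hzi hgpos)] with δ hδ
      exact (le_div_iff₀ hgpos).1 hδ.2.le
  obtain ⟨δ, hδ, hδpos⟩ := ((Filter.eventually_all.2 hsmall).and self_mem_nhdsWithin).exists
  exact ⟨δ, hδpos, hδ⟩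

lemma isBasic_of_mem_extremePoints (hz : z ∈ (standardPolyhedron A b).extremePoints ℝ) :
    IsBasic A z := by
  intro g hg hsub
  obtain ⟨⟨hzb, hz0⟩, hext⟩ := mem_extremePoints.1 hz
  obtain ⟨δ, hδ, hle⟩ := exists_pos_forall_mul_abs_le hz0 hsub
  have hmem : ∀ s : ℝ, |s| = δ → z + s • g ∈ standardPolyhedron A b := fun s hs ↦ by
    refine ⟨by rw [mulVec_add, mulVec_smul, hzb, hg, smul_zero, add_zero], fun i ↦ ?_⟩
    have hi := hle i
    rw [← hs, ← abs_mul] at hi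
    change 0 ≤ z i + s * g i
    linarith [neg_abs_le (s * g i)]
  have hmid : z ∈ openSegment ℝ (z + δ • g) (z + (-δ) • g) :=
    ⟨1 / 2, 1 / 2, by norm_num, by norm_num, by norm_num, by module⟩
  have heq := (hext _ (hmem δ (abs_of_pos hδ)) _ (hmem (-δ) (by rw [abs_neg, abs_of_pos hδ]))
    hmid).1
  exact (smul_eq_zero.1 (add_eq_left.1 heq)).resolve_left hδ.ne'

lemma add_smul_mem_standardPolyhedron (hx : A *ᵥ x = b) (hh : A *ᵥ h = 0)
    (hnonneg : 0 ≤ x + τ • h) : x + τ • h ∈ standardPolyhedron A b :=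
  ⟨by rw [mulVec_add, mulVec_smul, hx, hh, smul_zero, add_zero], hnonneg⟩

variable [Fintype α]

/-- A maximal circuit step from `x` to `y`, that is, a single step of `IsCircuitWalk`. -/
def IsCircuitStep (A : Matrix α β ℝ) (P : Set (β → ℝ)) (x y : β → ℝ) : Prop :=
  ∃ g ∈ elemVecs A, y = x + g ∧ ∀ ε : ℝ, 0 < ε → x + (1 + ε) • g ∉ P

lemma isCircuitStep_add_smul (hh : h ∈ elemVecs A) (hτ : 0 < τ) {i : β} (hi : h i < 0)
    (hblock : x i + τ * h i = 0) :
    IsCircuitStep A (standardPolyhedron A b) x (x + τ • h) := by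
  refine ⟨τ • h, smul_mem_elemVecs hh hτ.ne', rfl, fun ε hε hmem ↦ ?_⟩
  have hnonneg : 0 ≤ x i + (1 + ε) * (τ * h i) := hmem.2 i
  nlinarith [mul_pos hε (mul_pos hτ (neg_pos.2 hi))]

lemma IsBasic.exists_eq_zero_and_ne_zero (hz : IsBasic A z) (hh : h ∈ elemVecs A) :
    ∃ i, z i = 0 ∧ h i ≠ 0 := by
  obtain ⟨i, hi, hzi⟩ := Set.not_subset.1 fun hsub ↦ hh.2.1 (hz h hh.1 hsub)
  exact ⟨i, notMem_support.1 hzi, hi⟩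

-- Every elementary vector of a conformal decomposition of `w` meets `{z = 0}`, since `z` is basic.
lemma IsBasic.abs_le_circImb_mul_sum_abs (hz : IsBasic A z) {w : β → ℝ} (hw : A *ᵥ w = 0) (i : β) :
    |w i| ≤ circImb A * ∑ j with z j = 0, |w j| := by
  obtain ⟨k, g, -, hg, rfl⟩ := exists_conformal_decomposition hw
  have habs := abs_sum_apply_of_isConformal (s := univ) fun t _ ↦ (hg t).2
  have hterm : ∀ t, |g t i| ≤ circImb A * ∑ j with z j = 0, |g t j| := fun t ↦ by
    obtain ⟨j, hzj, hgj⟩ := hz.exists_eq_zero_and_ne_zero (hg t).1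
    refine (abs_le_circImb_mul_abs (hg t).1 hgj i).trans ?_
    refine mul_le_mul_of_nonneg_left ?_ (circImb_nonneg A)
    exact single_le_sum (f := fun j ↦ |g t j|) (fun _ _ ↦ abs_nonneg _) (by simpa using hzj)
  calc |(∑ t, g t) i| = ∑ t, |g t i| := habs i
    _ ≤ ∑ t, circImb A * ∑ j with z j = 0, |g t j| := sum_le_sum fun t _ ↦ hterm t
    _ = circImb A * ∑ j with z j = 0, |(∑ t, g t) j| := by
      rw [← mul_sum, sum_comm, sum_congr rfl fun j _ ↦ (habs j).symm]

lemma IsBasic.abs_sub_le_circImb_mul_excess (hz : IsBasic A z) (hx : 0 ≤ x)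
    (hker : A *ᵥ (z - x) = 0) (i : β) : |z i - x i| ≤ circImb A * excess z x := by
  rw [← sum_abs_sub_eq_excess hx]
  exact hz.abs_le_circImb_mul_sum_abs hker i

lemma IsBasic.exists_steep_conformal (hz : IsBasic A z) (hx : 0 ≤ x) (hker : A *ᵥ (z - x) = 0)
    (hne : x ≠ z) :
    ∃ h ∈ elemVecs A, IsConformal h (z - x) ∧ excess z h < 0 ∧
      excess z x ≤ Fintype.card β * -excess z h := by
  obtain ⟨h, hh, hconf, hsum⟩ :=
    exists_mem_elemVecs_sum_abs_le hker (sub_ne_zero.2 hne.symm) {i | z i = 0}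
  refine ⟨h, hh, hconf, ?_, ?_⟩
  · obtain ⟨i, hzi, hi⟩ := hz.exists_eq_zero_and_ne_zero hh
    rw [← neg_pos, ← sum_abs_eq_neg_excess hx hconf]
    exact sum_pos' (fun _ _ ↦ abs_nonneg _) ⟨i, by simpa using hzi, abs_pos.2 hi⟩
  · rwa [sum_abs_sub_eq_excess hx, sum_abs_eq_neg_excess hx hconf] at hsum

lemma neg_excess_le (hh : h ∈ elemVecs A) {i : β} (hi : h i ≠ 0) :
    -excess z h ≤ Fintype.card β * (circImb A * |h i|) :=
  calc -excess z h ≤ ∑ j with z j = 0, |h j| := by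
        rw [excess, ← sum_neg_distrib]
        exact sum_le_sum fun j _ ↦ neg_le_abs (h j)
    _ ≤ ∑ j, |h j| := sum_le_univ_sum_of_nonneg fun j ↦ abs_nonneg (h j)
    _ ≤ ∑ _j : β, circImb A * |h i| := sum_le_sum fun j _ ↦ abs_le_circImb_mul_abs hh hi j
    _ = Fintype.card β * (circImb A * |h i|) := by simp

lemma excess_le_of_blocking (hz : 0 ≤ z) (hh : h ∈ elemVecs A) (hconf : IsConformal h (z - x))
    (hsteep : excess z x ≤ Fintype.card β * -excess z h) {i : β} (hi : h i < 0)
    (hxi : x i ≤ Fintype.card β * z i) :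
    excess z x ≤ Fintype.card β ^ 3 * circImb A * z i := by
  have hzi : 0 ≤ z i := hz i
  have hκ : 0 ≤ circImb A := circImb_nonneg A
  have habs : |h i| ≤ Fintype.card β * z i := by
    rw [abs_of_neg hi]
    linarith [hconf.le_of_neg hi, Pi.sub_apply z x i]
  calc excess z x ≤ Fintype.card β * -excess z h := hsteep
    _ ≤ Fintype.card β * (Fintype.card β * (circImb A * |h i|)) := by
      gcongr
      exact neg_excess_le hh hi.ne
    _ ≤ Fintype.card β * (Fintype.card β * (circImb A * (Fintype.card β * z i))) := by gcongr
    _ = Fintype.card β ^ 3 * circImb A * z i := by ring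

lemma IsBasic.exists_isCircuitStep_isProgress (hz : IsBasic A z)
    (hzP : z ∈ standardPolyhedron A b) (hxP : x ∈ standardPolyhedron A b) (hne : x ≠ z) :
    ∃ y ∈ standardPolyhedron A b, IsCircuitStep A (standardPolyhedron A b) x y ∧
      IsProgress (Fintype.card β) (circImb A) z x y := by
  have hker {v : β → ℝ} (hv : v ∈ standardPolyhedron A b) : A *ᵥ (z - v) = 0 := by
    rw [mulVec_sub, hzP.1, hv.1, sub_self]
  obtain ⟨h, hh, hconf, hneg, hsteep⟩ := hz.exists_steep_conformal hxP.2 (hker hxP) hne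
  obtain ⟨j, -, hj⟩ := exists_lt_of_sum_lt (hneg.trans_eq sum_const_zero.symm)
  obtain ⟨τ, hτ, hy0, i, hi, hblock⟩ := exists_maximal_step hzP.2 hxP.2 hconf ⟨j, hj⟩
  have hτc : τ ≤ Fintype.card β := step_length_le hneg hsteep hy0
  have hyP := add_smul_mem_standardPolyhedron hxP.1 hh.1 hy0
  have hdecay := excess_step_le (by linarith) hτ hxP.2 hneg hsteep
  refine ⟨x + τ • h, hyP, isCircuitStep_add_smul hh (by linarith) hi hblock, hdecay,
    fun l hl ↦ step_apply_le_mul hτ hτc hxP.2 hconf hl, i, ?_⟩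
  have hzi : 0 ≤ z i := hzP.2 i
  have hyi : (x + τ • h) i = 0 := hblock
  rcases lt_or_ge (Fintype.card β * z i) (x i) with hlarge | hsmall
  · exact Or.inl ⟨hlarge, by rw [hyi]; positivity⟩
  refine Or.inr ⟨hzi.lt_of_ne' fun hzero ↦ ?_, ?_,
    excess_le_of_blocking hzP.2 hh hconf hsteep hi hsmall⟩
  · rw [hzero, mul_zero] at hsmall
    linarith [mul_neg_of_pos_of_neg (zero_lt_one.trans_le hτ) hi]
  · have hprox := hz.abs_sub_le_circImb_mul_excess hy0 (hker hyP) i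
    rw [hyi, sub_zero] at hprox
    have hle : excess z (x + τ • h) ≤ excess z x := by
      rw [excess_add_smul]
      nlinarith
    exact (le_abs_self _).trans (hprox.trans (mul_le_mul_of_nonneg_left hle (circImb_nonneg A)))

theorem exists_isCircuitWalk_standardPolyhedron (hx : x ∈ standardPolyhedron A b)
    (hz : z ∈ (standardPolyhedron A b).extremePoints ℝ) (hne : x ≠ z) :
    ∃ (k : ℕ) (w : Fin (k + 1) → β → ℝ), IsCircuitWalk A (standardPolyhedron A b) w ∧
      w 0 = x ∧ w (Fin.last k) = z ∧
      (k : ℝ) ≤ Fintype.card β *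
        (2 + Fintype.card β * Real.log (Fintype.card β ^ 3 * circImb A ^ 2)) := by
  have hcard : (1 : ℝ) ≤ Fintype.card β := by
    obtain ⟨i, -⟩ := Function.ne_iff.1 hne
    exact_mod_cast Fintype.card_pos_iff.2 ⟨i⟩
  have hκ : 1 ≤ circImb A :=
    one_le_circImb (w := x - z) (by rw [mulVec_sub, hx.1, hz.1.1, sub_self]) (sub_ne_zero.2 hne)
  let Step (v y : standardPolyhedron A b) : Prop :=
    IsCircuitStep A (standardPolyhedron A b) v y ∧ IsProgress (Fintype.card β) (circImb A) z v y
  have hnext (v : standardPolyhedron A b) (hv : v ≠ ⟨z, hz.1⟩) : ∃ y, Step v y := by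
    obtain ⟨y, hy, hstep⟩ := (isBasic_of_mem_extremePoints hz).exists_isCircuitStep_isProgress
      hz.1 v.2 fun hvz ↦ hv (Subtype.ext hvz)
    exact ⟨⟨y, hy⟩, hstep⟩
  have hlength (k : ℕ) (p : ℕ → standardPolyhedron A b) (hp : ∀ t < k, Step (p t) (p (t + 1))) :=
    length_le_of_isProgress (p := fun t ↦ (p t).1) hcard hκ fun t ht ↦ (hp t ht).2
  obtain ⟨k, p, hp0, hpk, hp⟩ := exists_chain_of_forall_length_le hnext hlength ⟨x, hx⟩
  exact ⟨k, fun t ↦ (p t).1, ⟨fun t ↦ (p t).2, fun t ↦ (hp t t.2).1⟩, congrArg Subtype.val hp0,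
    congrArg Subtype.val hpk, hlength k p hp⟩

end StandardForm

section Capacitated

variable {α β : Type} [Fintype β] {A : Matrix α β ℝ} {b : α → ℝ} {u x : β → ℝ} {v : β ⊕ β → ℝ}

/-- The capacitated polyhedron `P_u = {z | A z = b, 0 ≤ z ≤ u}`. -/
def capacitatedPolyhedron (A : Matrix α β ℝ) (b : α → ℝ) (u : β → ℝ) : Set (β → ℝ) :=
  {z | A *ᵥ z = b ∧ 0 ≤ z ∧ z ≤ u}

/-- The constraint matrix of the system `A x = b`, `x + s = u`, which turns the capacities `u` into
equalities with one slack variable `s i` (indexed by `Sum.inr i`) per coordinate. -/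
def slackMatrix (A : Matrix α β ℝ) : Matrix (α ⊕ β) (β ⊕ β) ℝ :=
  fromBlocks A 0 1 1

lemma slackMatrix_mulVec_eq_iff :
    slackMatrix A *ᵥ v = Sum.elim b u ↔
      A *ᵥ (v ∘ Sum.inl) = b ∧ v ∘ Sum.inl + v ∘ Sum.inr = u := by
  simp [slackMatrix, fromBlocks_mulVec, Sum.elim_eq_iff]

lemma slackMatrix_mulVec_eq_zero_iff :
    slackMatrix A *ᵥ v = 0 ↔ A *ᵥ (v ∘ Sum.inl) = 0 ∧ v ∘ Sum.inr = -(v ∘ Sum.inl) := by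
  rw [← Sum.elim_zero_zero, slackMatrix_mulVec_eq_iff, add_eq_zero_iff_eq_neg']

lemma mem_standardPolyhedron_slackMatrix_iff :
    v ∈ standardPolyhedron (slackMatrix A) (Sum.elim b u) ↔
      v ∘ Sum.inl ∈ capacitatedPolyhedron A b u ∧ v ∘ Sum.inr = u - v ∘ Sum.inl := by
  have hnonneg : 0 ≤ v ↔ 0 ≤ v ∘ Sum.inl ∧ 0 ≤ v ∘ Sum.inr := Sum.forall
  simp only [standardPolyhedron, capacitatedPolyhedron, Set.mem_ofPred_eq,
    slackMatrix_mulVec_eq_iff, hnonneg, eq_sub_iff_add_eq']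
  constructor
  · rintro ⟨⟨hb, rfl⟩, hx, hs⟩
    exact ⟨⟨hb, hx, le_add_of_nonneg_right hs⟩, rfl⟩
  · rintro ⟨⟨hb, hx, hu⟩, rfl⟩
    exact ⟨⟨hb, rfl⟩, hx, nonneg_of_le_add_right hu⟩

lemma sumElim_mem_standardPolyhedron_slackMatrix (hx : x ∈ capacitatedPolyhedron A b u) :
    Sum.elim x (u - x) ∈ standardPolyhedron (slackMatrix A) (Sum.elim b u) :=
  mem_standardPolyhedron_slackMatrix_iff.2 ⟨hx, rfl⟩

lemma sumElim_mem_extremePoints_slackMatrix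
    (hx : x ∈ (capacitatedPolyhedron A b u).extremePoints ℝ) :
    Sum.elim x (u - x) ∈
      (standardPolyhedron (slackMatrix A) (Sum.elim b u)).extremePoints ℝ := by
  refine ⟨sumElim_mem_standardPolyhedron_slackMatrix hx.1, fun v₁ hv₁ v₂ hv₂ hseg ↦ ?_⟩
  rw [mem_standardPolyhedron_slackMatrix_iff] at hv₁ hv₂
  have hproj : x ∈ openSegment ℝ (v₁ ∘ Sum.inl) (v₂ ∘ Sum.inl) := by
    obtain ⟨a₁, a₂, ha₁, ha₂, hsum, hcomb⟩ := hseg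
    exact ⟨a₁, a₂, ha₁, ha₂, hsum, congrArg (· ∘ Sum.inl) hcomb⟩
  have hinl : v₁ ∘ Sum.inl = x := hx.2 hv₁.1 hv₂.1 hproj
  rw [← Sum.elim_comp_inl_inr v₁, hv₁.2, hinl]

variable [Fintype α]

lemma comp_inl_mem_elemVecs_of_mem_slackMatrix (hv : v ∈ elemVecs (slackMatrix A)) :
    v ∘ Sum.inl ∈ elemVecs A := by
  obtain ⟨hker, hne, hmin⟩ := hv
  obtain ⟨hA, hinr⟩ := slackMatrix_mulVec_eq_zero_iff.1 hker
  have hinr' (i : β) : v (Sum.inr i) = -v (Sum.inl i) := congrFun hinr i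
  refine ⟨hA, fun hzero ↦ hne ?_, fun h hh hh0 hlt ↦ ?_⟩
  · rw [← Sum.elim_comp_inl_inr v, hinr, hzero, neg_zero, Sum.elim_zero_zero]
  · refine hmin (Sum.elim h (-h)) (slackMatrix_mulVec_eq_zero_iff.2 ⟨hh, rfl⟩)
      (fun hzero ↦ hh0 (congrArg (· ∘ Sum.inl) hzero)) ⟨?_, fun hsub ↦ hlt.2 fun i hi ↦ ?_⟩
    · rintro (i | i) hi
      · exact hlt.1 hi
      · have hvi : v (Sum.inl i) ≠ 0 := hlt.1 (neg_ne_zero.1 hi)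
        simpa [hinr'] using hvi
    · exact hsub (a := Sum.inl i) hi

lemma circImb_slackMatrix_le : circImb (slackMatrix A) ≤ circImb A := by
  refine Real.sSup_le ?_ (circImb_nonneg A)
  rintro _ ⟨v, hv, i, j, hi, -, rfl⟩
  have hinr := (slackMatrix_mulVec_eq_zero_iff.1 hv.1).2
  let toCoord : β ⊕ β → β := Sum.elim id id
  have habs (l : β ⊕ β) : |v l| = |(v ∘ Sum.inl) (toCoord l)| := by
    rcases l with l | l
    · rfl
    · exact (congrArg abs (congrFun hinr l)).trans (abs_neg _)
  rw [div_le_iff₀ (abs_pos.2 hi), habs i, habs j]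
  refine abs_le_circImb_mul_abs (comp_inl_mem_elemVecs_of_mem_slackMatrix hv) ?_ _
  rwa [← abs_ne_zero, ← habs, abs_ne_zero]

lemma isCircuitWalk_comp_inl {k : ℕ} {w : Fin (k + 1) → β ⊕ β → ℝ}
    (hw : IsCircuitWalk (slackMatrix A)
      (standardPolyhedron (slackMatrix A) (Sum.elim b u)) w) :
    IsCircuitWalk A (capacitatedPolyhedron A b u) fun t ↦ w t ∘ Sum.inl := by
  obtain ⟨hmem, hstep⟩ := hw
  refine ⟨fun t ↦ (mem_standardPolyhedron_slackMatrix_iff.1 (hmem t)).1, fun t ↦ ?_⟩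
  obtain ⟨g, hg, heq, hmax⟩ := hstep t
  refine ⟨g ∘ Sum.inl, comp_inl_mem_elemVecs_of_mem_slackMatrix hg, ?_, fun ε hε hcap ↦ ?_⟩
  · exact congrArg (· ∘ Sum.inl) heq
  · refine hmax ε hε (mem_standardPolyhedron_slackMatrix_iff.2 ⟨hcap, ?_⟩)
    have hx := (mem_standardPolyhedron_slackMatrix_iff.1 (hmem t.castSucc)).2
    have hginr := (slackMatrix_mulVec_eq_zero_iff.1 hg.1).2
    calc w t.castSucc ∘ Sum.inr + (1 + ε) • (g ∘ Sum.inr)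
        = u - (w t.castSucc ∘ Sum.inl + (1 + ε) • (g ∘ Sum.inl)) := by
          rw [hx, hginr, smul_neg]
          abel

end Capacitated

lemma slack_length_le {n κ κ' : ℝ} (hn : 1 ≤ n) (hκ' : 1 ≤ κ') (hκ : κ' ≤ κ) :
    2 * n * (2 + 2 * n * Real.log ((2 * n) ^ 3 * κ' ^ 2)) ≤ 40 * n ^ 2 * Real.log (n + κ) := by
  set L := Real.log (n + κ)
  have hlog_two : Real.log 2 ≤ L := Real.log_le_log (by norm_num) (by linarith)
  have hlog_n : Real.log n ≤ L := Real.log_le_log (by linarith) (by linarith)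
  have hlog_κ' : Real.log κ' ≤ L := Real.log_le_log (by linarith) (by linarith)
  have hlog : Real.log ((2 * n) ^ 3 * κ' ^ 2) ≤ 8 * L := by
    rw [Real.log_mul (by positivity) (by positivity), Real.log_pow, Real.log_pow,
      Real.log_mul (by norm_num) (by positivity)]
    push_cast
    linarith
  have hL : 1 ≤ 2 * L := by linarith [Real.log_two_gt_d9]
  calc 2 * n * (2 + 2 * n * Real.log ((2 * n) ^ 3 * κ' ^ 2))
      ≤ 2 * n * (2 * (n * (2 * L)) + 2 * n * (8 * L)) := by
        gcongr
        nlinarith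
    _ = 40 * n ^ 2 * L := by ring

lemma card_sq_mul_log_nonneg {α β : Type} [Fintype α] [Fintype β] (A : Matrix α β ℝ) :
    0 ≤ (Fintype.card β : ℝ) ^ 2 * Real.log (Fintype.card β + circImb A) := by
  rcases isEmpty_or_nonempty β with _ | _
  · simp
  · have hn : (1 : ℝ) ≤ Fintype.card β := by exact_mod_cast Fintype.card_pos
    have hlog := Real.log_nonneg (le_add_of_le_of_nonneg hn (circImb_nonneg A))
    positivity

end CircuitDiameter

open CircuitDiameter

theorem circuit_diameter_bound_capacitated_quadratic_general {α β : Type} [Fintype α] [Fintype β]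
    (A : Matrix α β ℝ) (b : α → ℝ) (u : β → ℝ) {x y : β → ℝ}
    (hx : x ∈ capacitatedPolyhedron A b u)
    (hy : y ∈ (capacitatedPolyhedron A b u).extremePoints ℝ) :
    ∃ (k : ℕ) (w : Fin (k + 1) → β → ℝ), IsCircuitWalk A (capacitatedPolyhedron A b u) w ∧
      w 0 = x ∧ w (Fin.last k) = y ∧
      (k : ℝ) ≤ 40 * (Fintype.card β : ℝ) ^ 2 * Real.log (Fintype.card β + circImb A) := by
  rcases eq_or_ne x y with rfl | hne
  · refine ⟨0, fun _ ↦ x, ⟨fun _ ↦ hx, fun t ↦ t.elim0⟩, rfl, rfl, ?_⟩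
    simpa [mul_assoc] using card_sq_mul_log_nonneg A
  have hne' : Sum.elim x (u - x) ≠ Sum.elim y (u - y) := fun heq ↦
    hne (congrArg (· ∘ Sum.inl) heq)
  have hxS := sumElim_mem_standardPolyhedron_slackMatrix hx
  have hyS := sumElim_mem_extremePoints_slackMatrix hy
  have hn : (1 : ℝ) ≤ Fintype.card β := by
    obtain ⟨i, -⟩ := Function.ne_iff.1 hne
    exact_mod_cast Fintype.card_pos_iff.2 ⟨i⟩
  have hκ : 1 ≤ circImb (slackMatrix A) :=
    one_le_circImb (by rw [mulVec_sub, hxS.1, hyS.1.1, sub_self]) (sub_ne_zero.2 hne')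
  obtain ⟨k, w, hw, hw0, hwk, hk⟩ := exists_isCircuitWalk_standardPolyhedron hxS hyS hne'
  refine ⟨k, fun t ↦ w t ∘ Sum.inl, isCircuitWalk_comp_inl hw, congrArg (· ∘ Sum.inl) hw0,
    congrArg (· ∘ Sum.inl) hwk, hk.trans ?_⟩
  rw [Fintype.card_sum, Nat.cast_add, ← two_mul]
  exact slack_length_le hn hκ circImb_slackMatrix_le

theorem circuit_diameter_bound_capacitated_quadratic :
    ∃ C : ℝ, 0 < C ∧
      ∀ (m n : ℕ) (A : Matrix (Fin m) (Fin n) ℝ) (b : Fin m → ℝ) (u : Fin n → ℝ),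
        A.rank = m →
        (∀ i, 0 < u i) →
        ∀ x y : Fin n → ℝ,
          x ∈ Set.extremePoints ℝ {z : Fin n → ℝ | A.mulVec z = b ∧ 0 ≤ z ∧ z ≤ u} →
          y ∈ Set.extremePoints ℝ {z : Fin n → ℝ | A.mulVec z = b ∧ 0 ≤ z ∧ z ≤ u} →
          ∃ (k : ℕ) (w : Fin (k + 1) → Fin n → ℝ),
            IsCircuitWalk A {z : Fin n → ℝ | A.mulVec z = b ∧ 0 ≤ z ∧ z ≤ u} w ∧
            w 0 = x ∧ w (Fin.last k) = y ∧
            (k : ℝ) ≤ C * (n : ℝ) ^ 2 * Real.log ((n : ℝ) + circImb A) := by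
  refine ⟨40, by norm_num, fun m n A b u _ _ x y hx hy ↦ ?_⟩
  simpa [capacitatedPolyhedron] using
    circuit_diameter_bound_capacitated_quadratic_general A b u hx.1 hy
end
end

section
/- Let W ⊆ ℝⁿ be a linear subspace with W ≠ {0} and W^⊥ ≠ {0}. Then κ_W = κ_{W^⊥}, i.e., the circuit imbalance measure of W equals that of its orthogonal complement. -/
open scoped BigOperators

noncomputable section
open Classical

/-- Elementary vectors of a linear subspace `W ⊆ ℝⁿ`: support-minimal nonzero vectors of `W`. -/
def elemVecsE {n : ℕ} (W : Submodule ℝ (EuclideanSpace ℝ (Fin n))) :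
    Set (EuclideanSpace ℝ (Fin n)) :=
  {g | g ∈ W ∧ g ≠ 0 ∧
    ∀ h, h ∈ W → h ≠ 0 → ¬ ({i | h i ≠ 0} ⊂ {i | g i ≠ 0})}

/-- The circuit imbalance measure `κ_W` of a subspace. -/
def circImbE {n : ℕ} (W : Submodule ℝ (EuclideanSpace ℝ (Fin n))) : ℝ :=
  sSup {r : ℝ | ∃ g ∈ elemVecsE W, ∃ i j, g i ≠ 0 ∧ g j ≠ 0 ∧ r = |g j| / |g i|}

/-!
Let `g` be an elementary vector of `W` and `i ≠ j` two elements of its support. Minimality of the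
support yields, by duality, an elementary vector `h` of `Wᗮ` whose support contains `i` and meets
that of `g` inside `{i, j}`. Then `⟪g, h⟫ = 0` reads `g i * h i + g j * h j = 0`, so
`|g j| / |g i| = |h i| / |h j|`. Hence every ratio attained on `W` is attained on `Wᗮ`, and
conversely because `Wᗮᗮ = W`. The ratio `1`, which comes from `i = j`, is attained on every
nonzero subspace.
-/

open Function (support)

theorem support_sub_smul_ssubset {ι K : Type*} [Field K] {u v : ι → K} {k : ι}
    (huv : support u ⊆ support v) (hk : u k ≠ 0) :
    support (v - (v k / u k) • u) ⊂ support v := by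
  refine (Set.ssubset_iff_of_subset ?_).2 ⟨k, huv hk, fun h => h ?_⟩
  · intro l hl hvl
    have hul : u l = 0 := Function.notMem_support.1 fun hul => huv hul hvl
    exact hl (by simp [hvl, hul])
  · simp [hk]

theorem exists_apply_ne_zero {ι : Type*} {p : ENNReal} {E : ι → Type*}
    [∀ i, AddCommGroup (E i)] {v : PiLp p E} (hv : v ≠ 0) : ∃ i, v i ≠ 0 :=
  Function.ne_iff.1 ((WithLp.ofLp_injective p).ne hv)

section EuclideanSpace

variable {𝕜 ι : Type*} [RCLike 𝕜] [Fintype ι]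

theorem norm_mul_norm_eq_of_inner_eq_zero {x y : EuclideanSpace 𝕜 ι} {i j : ι} (hij : i ≠ j)
    (hxy : support x ∩ support y ⊆ {i, j}) (horth : inner 𝕜 x y = 0) :
    ‖x i‖ * ‖y i‖ = ‖x j‖ * ‖y j‖ := by
  have hoff : ∀ k ∉ ({i, j} : Finset ι), inner 𝕜 (x k) (y k) = 0 := by
    intro k hk
    have hk' : k ∉ support x ∩ support y := fun h => hk (by simpa using hxy h)
    rcases not_and_or.1 hk' with hx | hy
    · rw [Function.notMem_support.1 hx, inner_zero_left]
    · rw [Function.notMem_support.1 hy, inner_zero_right]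
  have hsum : inner 𝕜 (x i) (y i) + inner 𝕜 (x j) (y j) = 0 := by
    rw [← Finset.sum_pair (f := fun k => inner 𝕜 (x k) (y k)) hij,
      Finset.sum_subset (Finset.subset_univ _) fun k _ => hoff k, ← PiLp.inner_apply, horth]
  simpa [mul_comm] using congrArg norm (eq_neg_of_add_eq_zero_left hsum)

/- If the conclusion fails, the `i`-th basis vector is orthogonal to `Wᗮ ⊓ Uᗮ`, where `U` is the
coordinate subspace of `S`, hence lies in `W ⊔ U`; its component in `W` violates `hW`. -/
theorem exists_mem_orthogonal_apply_ne_zero {W : Submodule 𝕜 (EuclideanSpace 𝕜 ι)} {S : Set ι}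
    {i : ι} (hi : i ∉ S) (hW : ∀ w ∈ W, support w ⊆ insert i S → w i = 0) :
    ∃ h ∈ Wᗮ, Disjoint (support h) S ∧ h i ≠ 0 := by
  by_contra! hc
  let U : Submodule 𝕜 (EuclideanSpace 𝕜 ι) :=
    Submodule.span 𝕜 ((fun k => EuclideanSpace.single k 1) '' S)
  have hU : ∀ u ∈ U, ∀ k ∉ S, u k = 0 := by
    intro u hu k hk
    induction hu using Submodule.span_induction with
    | mem x hx =>
      obtain ⟨l, hl, rfl⟩ := hx
      simp [ne_of_mem_of_not_mem hl hk |>.symm]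
    | zero => simp
    | add x y _ _ hx hy => simp [hx, hy]
    | smul a x _ hx => simp [hx]
  have hmem : EuclideanSpace.single i 1 ∈ W ⊔ U := by
    rw [← Submodule.orthogonal_orthogonal (W ⊔ U), ← Submodule.inf_orthogonal,
      Submodule.mem_orthogonal]
    rintro h ⟨hhW, hhU⟩
    have hdisj : Disjoint (support h) S := Set.disjoint_right.2 fun k hk => by
      simpa [EuclideanSpace.inner_single_left] using
        hhU _ (Submodule.subset_span (Set.mem_image_of_mem _ hk))
    simp [EuclideanSpace.inner_single_right, hc h hhW hdisj]
  obtain ⟨w, hw, u, hu, hwu⟩ := Submodule.mem_sup.1 hmem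
  have hw_apply : ∀ k ∉ S, w k = EuclideanSpace.single i (1 : 𝕜) k := fun k hk => by
    simp [← hwu, hU u hu k hk]
  have hw_supp : support w ⊆ insert i S := fun k hk => by
    by_contra hk'
    obtain ⟨hki, hkS⟩ := not_or.1 hk'
    exact hk (by simp [hw_apply k hkS, hki])
  simpa [hw_apply i hi] using hW w hw hw_supp

end EuclideanSpace

section ElementaryVectors

variable {n : ℕ} {W : Submodule ℝ (EuclideanSpace ℝ (Fin n))}

theorem exists_support_ssubset_of_notMem_elemVecsE {v : EuclideanSpace ℝ (Fin n)} {i : Fin n}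
    (hv : v ∈ W) (hi : v i ≠ 0) (hvE : v ∉ elemVecsE W) :
    ∃ u ∈ W, u i ≠ 0 ∧ support u ⊂ support v := by
  have hv0 : v ≠ 0 := by rintro rfl; exact hi rfl
  obtain ⟨f, hf, hf0, hfv⟩ : ∃ f ∈ W, f ≠ 0 ∧ support f ⊂ support v := by
    by_contra! hc
    exact hvE ⟨hv, hv0, hc⟩
  by_cases hfi : f i = 0
  · obtain ⟨k, hk⟩ := exists_apply_ne_zero hf0
    exact ⟨v - (v k / f k) • f, W.sub_mem hv (W.smul_mem _ hf), by simpa [hfi] using hi,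
      support_sub_smul_ssubset hfv.subset hk⟩
  · exact ⟨f, hf, hfi, hfv⟩

theorem exists_mem_elemVecsE_support_subset {v : EuclideanSpace ℝ (Fin n)} {i : Fin n}
    (hv : v ∈ W) (hi : v i ≠ 0) :
    ∃ g ∈ elemVecsE W, g i ≠ 0 ∧ support g ⊆ support v := by
  induction hs : support v using WellFoundedLT.induction generalizing v with
  | ind s ih =>
    subst hs
    by_cases hvE : v ∈ elemVecsE W
    · exact ⟨v, hvE, hi, subset_rfl⟩
    · obtain ⟨u, hu, hui, huv⟩ := exists_support_ssubset_of_notMem_elemVecsE hv hi hvE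
      obtain ⟨g, hg, hgi, hgu⟩ := ih _ huv hu hui rfl
      exact ⟨g, hg, hgi, hgu.trans huv.subset⟩

theorem exists_mem_elemVecsE_orthogonal {g : EuclideanSpace ℝ (Fin n)} (hg : g ∈ elemVecsE W)
    {i j : Fin n} (hij : i ≠ j) (hi : g i ≠ 0) (hj : g j ≠ 0) :
    ∃ h ∈ elemVecsE Wᗮ, h i ≠ 0 ∧ support g ∩ support h ⊆ {i, j} := by
  obtain ⟨v, hv, hvg, hvi⟩ : ∃ v ∈ Wᗮ, Disjoint (support v) (support g \ {i, j}) ∧ v i ≠ 0 := by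
    refine exists_mem_orthogonal_apply_ne_zero (by simp) fun w hw hws => ?_
    by_contra hwi
    have hwg : support w ⊂ support g := by
      refine (Set.ssubset_iff_of_subset fun k hk => ?_).2 ⟨j, hj, fun hjw => ?_⟩
      · rcases hws hk with rfl | hk
        exacts [hi, hk.1]
      · simpa [hij.symm] using hws hjw
    exact hg.2.2 w hw (by rintro rfl; exact hwi rfl) hwg
  obtain ⟨h, hh, hhi, hhv⟩ := exists_mem_elemVecsE_support_subset hv hvi
  refine ⟨h, hh, hhi, fun k ⟨hgk, hhk⟩ => ?_⟩
  by_contra hk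
  exact Set.disjoint_left.1 hvg (hhv hhk) ⟨hgk, hk⟩

/-- The ratios `|g j| / |g i|` over elementary vectors `g` of `W` and `i, j ∈ supp g`; the circuit
imbalance measure `circImbE W` is by definition the supremum of this set. -/
def circuitRatios (W : Submodule ℝ (EuclideanSpace ℝ (Fin n))) : Set ℝ :=
  {r : ℝ | ∃ g ∈ elemVecsE W, ∃ i j, g i ≠ 0 ∧ g j ≠ 0 ∧ r = |g j| / |g i|}

theorem one_mem_circuitRatios (hW : W ≠ ⊥) : 1 ∈ circuitRatios W := by
  obtain ⟨v, hv, hv0⟩ := W.exists_mem_ne_zero_of_ne_bot hW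
  obtain ⟨i, hi⟩ := exists_apply_ne_zero hv0
  obtain ⟨g, hg, hgi, -⟩ := exists_mem_elemVecsE_support_subset hv hi
  exact ⟨g, hg, i, i, hgi, hgi, (div_self (abs_ne_zero.2 hgi)).symm⟩

theorem circuitRatios_subset_orthogonal (hW : Wᗮ ≠ ⊥) :
    circuitRatios W ⊆ circuitRatios Wᗮ := by
  rintro _ ⟨g, hg, i, j, hi, hj, rfl⟩
  rcases eq_or_ne i j with rfl | hij
  · rw [div_self (abs_ne_zero.2 hi)]
    exact one_mem_circuitRatios hW
  · obtain ⟨h, hh, hhi, hgh⟩ := exists_mem_elemVecsE_orthogonal hg hij hi hj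
    have hmul : |g i| * |h i| = |g j| * |h j| :=
      norm_mul_norm_eq_of_inner_eq_zero hij hgh (hh.1 g hg.1)
    have hhj : h j ≠ 0 := by
      intro hhj
      simp [hhj, hi, hhi] at hmul
    refine ⟨h, hh, j, i, hhj, hhi, ?_⟩
    rw [div_eq_div_iff (abs_ne_zero.2 hi) (abs_ne_zero.2 hhj), ← hmul, mul_comm]

theorem circuitRatios_orthogonal (hW : W ≠ ⊥) (hWp : Wᗮ ≠ ⊥) :
    circuitRatios Wᗮ = circuitRatios W := by
  refine Set.Subset.antisymm ?_ (circuitRatios_subset_orthogonal hWp)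
  simpa only [Submodule.orthogonal_orthogonal] using
    circuitRatios_subset_orthogonal (W := Wᗮ) (by rwa [Submodule.orthogonal_orthogonal])

end ElementaryVectors

theorem circuit_imbalance_duality {n : ℕ} (W : Submodule ℝ (EuclideanSpace ℝ (Fin n)))
    (hW : W ≠ ⊥) (hWp : Wᗮ ≠ ⊥) :
    circImbE W = circImbE Wᗮ :=
  congrArg sSup (circuitRatios_orthogonal hW hWp).symm
end
end

section
/- Let A ∈ ℝ^{m×n}, b ∈ ℝ^m, c ∈ ℝⁿ, P = {x ∈ ℝⁿ : Ax = b, x ≥ 0}, and let OPT = min{⟨c, z⟩ : z ∈ P} be finite. Let x ∈ P, and let g minimize ⟨c, z⟩ over the set F = {z ∈ ker(A) : Σ_{i ∈ supp(x)} z_i⁻ / x_i ≤ 1 and z_i ≥ 0 for all i ∉ supp(x)} (assume this minimum is attained at g). Then x + g ∈ P (so the maximal stepsize α in aug_P(x, g) satisfies α ≥ 1), and for x' = aug_P(x, g) it holds that ⟨c, x'⟩ − OPT ≤ (1 − 1/|supp(x)|) · (⟨c, x⟩ − OPT). -/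
open Matrix
open scoped BigOperators

noncomputable section
open Classical

/-!
For every feasible `z`, the direction `z - x` decreases each coordinate `i` by at most `x i`, so
each support coordinate of `x` contributes at most `1` to its ratio cost. Hence
`(z - x) / |supp x|` is feasible for the minimum-ratio problem, and its minimizer `g` recovers at
least a `1 / |supp x|` fraction of the improvement from `x` to `z`. Since `⟨c, g⟩ ≤ 0`, a step
longer than `1` only helps.
-/

section

variable {κ ι K : Type*} [Fintype ι] [Field K] [LinearOrder K]
  {A : Matrix κ ι K} {b : κ → K} {c x z g : ι → K}

/-- The polyhedron `P = {z | A z = b, z ≥ 0}` in standard equality form. -/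
def standardPolyhedron (A : Matrix κ ι K) (b : κ → K) : Set (ι → K) :=
  {z | A *ᵥ z = b ∧ 0 ≤ z}

/-- The feasible region `F` of the minimum-ratio circuit problem at `x`, with weights `1 / x i`.
The infinite weight at a coordinate where `x` vanishes is encoded as the constraint `0 ≤ z i`. -/
def ratioRegion (A : Matrix κ ι K) (x : ι → K) : Set (ι → K) :=
  {z | A *ᵥ z = 0 ∧
    (∑ i ∈ Finset.univ.filter (fun i => x i ≠ 0), max 0 (-(z i)) / x i) ≤ 1 ∧
    ∀ i, x i = 0 → 0 ≤ z i}

variable [IsStrictOrderedRing K]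

theorem zero_mem_ratioRegion : 0 ∈ ratioRegion A x :=
  ⟨mulVec_zero A, by simp, fun _ _ => le_rfl⟩

theorem add_nonneg_of_mem_ratioRegion (hx : 0 ≤ x) (hg : g ∈ ratioRegion A x) : 0 ≤ x + g := by
  obtain ⟨-, hcost, hzero⟩ := hg
  intro i
  by_cases hxi : x i = 0
  · exact add_nonneg (hx i) (hzero i hxi)
  · have hratio : max 0 (-(g i)) / x i ≤ 1 :=
      (Finset.single_le_sum (f := fun j => max 0 (-(g j)) / x j)
        (fun j _ => div_nonneg (le_max_left _ _) (hx j)) (by simpa using hxi)).trans hcost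
    have hdecrease : -(g i) ≤ x i :=
      (le_max_right _ _).trans ((div_le_one ((hx i).lt_of_ne' hxi)).1 hratio)
    exact neg_le_iff_add_nonneg.1 hdecrease

theorem add_mem_standardPolyhedron (hx : x ∈ standardPolyhedron A b)
    (hg : g ∈ ratioRegion A x) : x + g ∈ standardPolyhedron A b :=
  ⟨by rw [mulVec_add, hx.1, hg.1, add_zero], add_nonneg_of_mem_ratioRegion hx.2 hg⟩

theorem max_zero_neg_mul_sub_div_le {t u v : K} (ht : 0 ≤ t) (hu : 0 < u) (hv : 0 ≤ v) :
    max 0 (-(t * (v - u))) / u ≤ t := by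
  rw [div_le_iff₀ hu]
  refine max_le (mul_nonneg ht hu.le) ?_
  linarith [mul_nonneg ht hv]

theorem smul_sub_mem_ratioRegion {t : K} (ht : 0 ≤ t)
    (htx : (Function.support x).ncard * t ≤ 1)
    (hx : x ∈ standardPolyhedron A b) (hz : z ∈ standardPolyhedron A b) :
    t • (z - x) ∈ ratioRegion A x := by
  refine ⟨by rw [mulVec_smul, mulVec_sub, hz.1, hx.1, sub_self, smul_zero], ?_, fun i hxi => ?_⟩
  · have hcard : (Finset.univ.filter fun i => x i ≠ 0).card = (Function.support x).ncard := by
      rw [← Set.ncard_coe_finset, Finset.coe_filter_univ, Function.support]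
    calc ∑ i ∈ Finset.univ.filter (fun i => x i ≠ 0), max 0 (-((t • (z - x)) i)) / x i
        ≤ (Finset.univ.filter fun i => x i ≠ 0).card • t := by
          refine Finset.sum_le_card_nsmul _ _ _ fun i hi => ?_
          exact max_zero_neg_mul_sub_div_le ht
            ((hx.2 i).lt_of_ne' (Finset.mem_filter.1 hi).2) (hz.2 i)
      _ = (Function.support x).ncard * t := by rw [hcard, nsmul_eq_mul]
      _ ≤ 1 := htx
  · simpa [hxi] using mul_nonneg ht (hz.2 i)

theorem dotProduct_nonpos_of_isMinOn_ratioRegion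
    (hmin : IsMinOn (c ⬝ᵥ ·) (ratioRegion A x) g) : c ⬝ᵥ g ≤ 0 := by
  simpa using hmin zero_mem_ratioRegion

theorem dotProduct_le_of_isMinOn_ratioRegion
    (hmin : IsMinOn (c ⬝ᵥ ·) (ratioRegion A x) g)
    (hx : x ∈ standardPolyhedron A b) (hz : z ∈ standardPolyhedron A b) :
    c ⬝ᵥ g ≤ 1 / (Function.support x).ncard * (c ⬝ᵥ z - c ⬝ᵥ x) := by
  -- `div_self_le_one` also covers `x = 0`, where `1 / 0 = 0`.
  have hmem : (1 / (Function.support x).ncard : K) • (z - x) ∈ ratioRegion A x :=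
    smul_sub_mem_ratioRegion (by positivity)
      (by rw [mul_one_div]; exact div_self_le_one _) hx hz
  simpa only [dotProduct_smul, dotProduct_sub, smul_eq_mul] using isMinOn_iff.1 hmin _ hmem

theorem dotProduct_add_smul_sub_le_of_isMinOn_ratioRegion {α : K} (hα : 1 ≤ α)
    (hmin : IsMinOn (c ⬝ᵥ ·) (ratioRegion A x) g)
    (hx : x ∈ standardPolyhedron A b) (hz : z ∈ standardPolyhedron A b) :
    c ⬝ᵥ (x + α • g) - c ⬝ᵥ z ≤
      (1 - 1 / (Function.support x).ncard) * (c ⬝ᵥ x - c ⬝ᵥ z) := by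
  have hstep : α * c ⬝ᵥ g ≤ c ⬝ᵥ g :=
    mul_le_of_one_le_left (dotProduct_nonpos_of_isMinOn_ratioRegion hmin) hα
  calc c ⬝ᵥ (x + α • g) - c ⬝ᵥ z
      = c ⬝ᵥ x - c ⬝ᵥ z + α * c ⬝ᵥ g := by
        rw [dotProduct_add, dotProduct_smul, smul_eq_mul]; ring
    _ ≤ c ⬝ᵥ x - c ⬝ᵥ z + 1 / (Function.support x).ncard * (c ⬝ᵥ z - c ⬝ᵥ x) := by
        have hgain := dotProduct_le_of_isMinOn_ratioRegion hmin hx hz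
        exact add_le_add_right (hstep.trans hgain) _
    _ = (1 - 1 / (Function.support x).ncard) * (c ⬝ᵥ x - c ⬝ᵥ z) := by ring

theorem ratio_circuit_progress_general {α : K} (hx : x ∈ standardPolyhedron A b)
    (hg : g ∈ ratioRegion A x) (hmin : IsMinOn (c ⬝ᵥ ·) (ratioRegion A x) g)
    (hα : IsGreatest {a : K | 0 ≤ a ∧ x + a • g ∈ standardPolyhedron A b} α)
    (hz : z ∈ standardPolyhedron A b) :
    x + g ∈ standardPolyhedron A b ∧ 1 ≤ α ∧
      c ⬝ᵥ (x + α • g) - c ⬝ᵥ z ≤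
        (1 - 1 / (Function.support x).ncard) * (c ⬝ᵥ x - c ⬝ᵥ z) := by
  have hxg := add_mem_standardPolyhedron hx hg
  have hα_one : 1 ≤ α := hα.2 ⟨zero_le_one, by rwa [one_smul]⟩
  exact ⟨hxg, hα_one, dotProduct_add_smul_sub_le_of_isMinOn_ratioRegion hα_one hmin hx hz⟩

end

/-- Progress of the minimum-ratio circuit rule (Wallacher's rule): the returned direction `g`
admits stepsize `α ≥ 1`, and a maximal augmentation decreases the optimality gap by a factor
`(1 - 1/|supp x|)`. -/
theorem ratio_circuit_progress {m n : ℕ} (A : Matrix (Fin m) (Fin n) ℝ) (b : Fin m → ℝ)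
    (c : Fin n → ℝ) (OPT : ℝ)
    (P : Set (Fin n → ℝ)) (hP : P = {z : Fin n → ℝ | A.mulVec z = b ∧ 0 ≤ z})
    (hOPT : IsLeast {r : ℝ | ∃ z ∈ P, r = c ⬝ᵥ z} OPT)
    (x : Fin n → ℝ) (hx : x ∈ P)
    (F : Set (Fin n → ℝ))
    (hF : F = {z : Fin n → ℝ | A.mulVec z = 0 ∧
      (∑ i ∈ Finset.univ.filter (fun i => x i ≠ 0), max 0 (-(z i)) / x i) ≤ 1 ∧
      ∀ i, x i = 0 → 0 ≤ z i})
    (g : Fin n → ℝ) (hgF : g ∈ F) (hgmin : ∀ z ∈ F, c ⬝ᵥ g ≤ c ⬝ᵥ z)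
    (α : ℝ) (hα : IsGreatest {a : ℝ | 0 ≤ a ∧ x + a • g ∈ P} α)
    (x' : Fin n → ℝ) (hx' : x' = x + α • g) :
    x + g ∈ P ∧ 1 ≤ α ∧
      c ⬝ᵥ x' - OPT ≤ (1 - 1 / (Set.ncard {i | x i ≠ 0} : ℝ)) * (c ⬝ᵥ x - OPT) := by
  subst hP hF hx'
  obtain ⟨⟨z, hz, rfl⟩, -⟩ := hOPT
  exact ratio_circuit_progress_general hx hgF hgmin hα hz
end
end

section
/- Let A ∈ ℝ^{m×n} and c, c' ∈ ℝⁿ with c ∈ ker(A), ‖c‖₂ = 1, and ‖c − c'‖_∞ < 1/(√n · (m+2) · κ_A), where κ_A ≥ 1. Let s' ∈ ℝⁿ be a dual feasible slack for LP(c'), i.e., s' ≥ 0 and s' − c' ∈ Im(Aᵀ). Then there exists an index j ∈ [n] with s'_j > (m+1)/(√n · (m+2)). -/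
open Matrix
open scoped BigOperators

noncomputable section
open Classical

/-- The ℓ∞-norm of a vector in `ℝⁿ`. -/
def normInf {n : ℕ} (v : Fin n → ℝ) : ℝ :=
  sSup (Set.range fun i => |v i|)

/-!
Shifting `s'` by `c - c'` gives a vector of the form `c + Aᵀ y`. As `c ∈ ker A` is orthogonal to
`Aᵀ y`, this vector is at least as long as `c`, so one of its coordinates is at least `‖c‖₂ / √n`
in absolute value, and undoing the shift costs at most `‖c - c'‖_∞` in that coordinate.
-/

section Euclidean

variable {ι : Type*} [Fintype ι]

lemma sum_sq_le_sum_add_sq_of_dotProduct_eq_zero {R : Type*} [CommRing R] [LinearOrder R]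
    [IsStrictOrderedRing R] {v w : ι → R} (h : v ⬝ᵥ w = 0) :
    ∑ i, v i ^ 2 ≤ ∑ i, (v i + w i) ^ 2 :=
  calc ∑ i, v i ^ 2 ≤ ∑ i, v i ^ 2 + ∑ i, w i ^ 2 :=
        le_add_of_nonneg_right (Finset.sum_nonneg fun i _ => sq_nonneg (w i))
    _ = ∑ i, v i ^ 2 + 2 * (v ⬝ᵥ w) + ∑ i, w i ^ 2 := by rw [h, mul_zero, add_zero]
    _ = ∑ i, (v i + w i) ^ 2 := by
        simp only [dotProduct, add_sq, Finset.sum_add_distrib, Finset.mul_sum, mul_assoc]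

lemma exists_sqrt_sum_sq_div_sqrt_card_le_abs [Nonempty ι] (v : ι → ℝ) :
    ∃ j, √(∑ i, v i ^ 2) / √(Fintype.card ι) ≤ |v j| := by
  obtain ⟨j, -, hj⟩ : ∃ j ∈ Finset.univ, (∑ i, v i ^ 2) / Fintype.card ι ≤ v j ^ 2 :=
    Finset.exists_le_of_sum_le Finset.univ_nonempty (by simp [mul_div_cancel₀])
  refine ⟨j, ?_⟩
  rw [← Real.sqrt_div' _ (Nat.cast_nonneg _), ← Real.sqrt_sq_eq_abs]
  exact Real.sqrt_le_sqrt hj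

end Euclidean

lemma dotProduct_transpose_mulVec_eq_zero {α β R : Type*} [Fintype α] [Fintype β]
    [NonUnitalCommSemiring R] {A : Matrix α β R} {v : β → R} (hv : A *ᵥ v = 0) (y : α → R) :
    v ⬝ᵥ Aᵀ *ᵥ y = 0 := by
  rw [dotProduct_transpose_mulVec, hv, dotProduct_zero]

lemma abs_le_normInf {n : ℕ} (v : Fin n → ℝ) (i : Fin n) : |v i| ≤ normInf v :=
  le_csSup (Set.finite_range _).bddAbove ⟨i, rfl⟩

lemma add_one_div_mul_add_two_le {K : Type*} [Field K] [LinearOrder K] [IsStrictOrderedRing K]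
    {q k κ : K} (hq : 0 ≤ q) (hk : 0 ≤ k) (hκ : 1 ≤ κ) :
    (k + 1) / (q * (k + 2)) ≤ 1 / q - 1 / (q * (k + 2) * κ) := by
  have hk2 : k + 2 ≠ 0 := by positivity
  have hdrop : 1 / (q * (k + 2) * κ) ≤ 1 / (q * (k + 2)) := by
    rw [← div_div]
    exact div_le_self (by positivity) hκ
  have hsplit : 1 / q = (k + 1) / (q * (k + 2)) + 1 / (q * (k + 2)) := by
    rw [← add_div, add_assoc, one_add_one_eq_two, mul_comm q, div_mul_cancel_left₀ hk2, one_div]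
  linarith

theorem big_slack_general {α β : Type*} [Fintype α] [Fintype β] (A : Matrix α β ℝ)
    {c c' s' : β → ℝ} {ε : ℝ} (hcker : A *ᵥ c = 0) (hcnorm : √(∑ i, c i ^ 2) = 1)
    (hpert : ∀ i, |c i - c' i| < ε) (hs'dual : ∃ y : α → ℝ, s' - c' = Aᵀ *ᵥ y) :
    ∃ j, 1 / √(Fintype.card β) - ε < |s' j| := by
  obtain ⟨y, hy⟩ := hs'dual
  have : Nonempty β := by
    by_contra hempty
    simp [not_nonempty_iff.mp hempty] at hcnorm
  have hlong : 1 ≤ √(∑ i, (c i + (s' - c') i) ^ 2) :=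
    hcnorm.symm.trans_le <| Real.sqrt_le_sqrt <| sum_sq_le_sum_add_sq_of_dotProduct_eq_zero <|
      hy ▸ dotProduct_transpose_mulVec_eq_zero hcker y
  obtain ⟨j, hj⟩ := exists_sqrt_sum_sq_div_sqrt_card_le_abs (c + (s' - c'))
  refine ⟨j, sub_lt_iff_lt_add.mpr ?_⟩
  calc 1 / √(Fintype.card β) ≤ √(∑ i, (c i + (s' - c') i) ^ 2) / √(Fintype.card β) := by gcongr
    _ ≤ |c j + (s' j - c' j)| := hj
    _ = |s' j + (c j - c' j)| := by ring_nf
    _ ≤ |s' j| + |c j - c' j| := abs_add_le _ _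
    _ < |s' j| + ε := by gcongr; exact hpert j

/-- If `c ∈ ker(A)` with `‖c‖₂ = 1` and `‖c - c'‖_∞ < 1/(√n (m+2) κ_A)`, then every dual
feasible slack `s'` for `LP(c')` has a coordinate `s'_j > (m+1)/(√n (m+2))`. -/
theorem big_slack {m n : ℕ} (A : Matrix (Fin m) (Fin n) ℝ) (c c' : Fin n → ℝ)
    (hcker : A.mulVec c = 0)
    (hcnorm : Real.sqrt (∑ i, (c i) ^ 2) = 1)
    (hkappa : 1 ≤ circImb A)
    (hpert : normInf (c - c') < 1 / (Real.sqrt n * ((m : ℝ) + 2) * circImb A))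
    (s' : Fin n → ℝ) (hs'nonneg : 0 ≤ s')
    (hs'dual : ∃ y : Fin m → ℝ, s' - c' = A.transpose.mulVec y) :
    ∃ j : Fin n, s' j > ((m : ℝ) + 1) / (Real.sqrt n * ((m : ℝ) + 2)) := by
  obtain ⟨j, hj⟩ := big_slack_general A hcker hcnorm
    (fun i => (abs_le_normInf (c - c') i).trans_lt hpert) hs'dual
  rw [Fintype.card_fin, abs_of_nonneg (hs'nonneg j)] at hj
  exact ⟨j, (add_one_div_mul_add_two_le (Real.sqrt_nonneg n) m.cast_nonneg hkappa).trans_lt hj⟩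
end
end

section
/- Let A ∈ ℝ^{m×n} have rank m with m < n, b ∈ ℝ^m, P = {x ∈ ℝⁿ : Ax = b, x ≥ 0}. Let B ⊆ [n] be a feasible basis with N = [n] \ B and x* = (A_B⁻¹ b, 0_N) ∈ P. For y ∈ P define L(y) = {i ∈ [n] : x*_i > n · κ_A · ‖y_N‖₁} and R(y) = {i ∈ [n] : y_i ≤ (n − m) · x*_i}. Let x ∈ P with x ≠ x*, let h^(1), …, h^(k) be a conformal circuit decomposition of x* − x with k ≤ n − m, let g = h^(j) for some j maximizing ‖h^(i)_N‖₁ over i ∈ [k], and let x' = aug_P(x, g). Then L(x) ⊆ L(x') ⊆ B and R(x) ⊆ R(x'). -/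
open Matrix
open scoped BigOperators

noncomputable section
open Classical

/-!
Off the basis `B` the target `xstar` vanishes, so there a conformal part `g` of `xstar - x` points
from `x ≥ 0` towards zero. Hence moving along `g` shrinks `‖x_N‖₁`, which gives the claim on `L`.
For `R`, the parts sum to `-x` on `N`, so `‖x_N‖₁` is at most `k` times the largest `‖g_N‖₁`,
which is positive because `g` cannot be supported on independent columns; feasibility of the step
gives `α ‖g_N‖₁ ≤ ‖x_N‖₁`, and so `α ≤ k`. A coordinate that the step increases thus
ends at most at `x_i + k (xstar_i - x_i) ≤ k xstar_i`.
-/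

theorem circImb_nonneg_s14 {α β : Type} [Fintype α] [Fintype β] (A : Matrix α β ℝ) :
    0 ≤ circImb A := by
  apply Real.sSup_nonneg
  rintro _ ⟨g, -, i, j, -, -, rfl⟩
  positivity

section

variable {ι J M R : Type*} [CommRing R]

theorem exists_notMem_ne_zero_of_mulVec_eq_zero [Fintype ι] {A : Matrix M ι R} {B : Finset ι}
    (hB : LinearIndepOn R Aᵀ (B : Set ι)) {g : ι → R} (hker : A *ᵥ g = 0) (hne : g ≠ 0) :
    ∃ i ∉ B, g i ≠ 0 := by
  by_contra! hoff
  have hcomb : ∑ i ∈ B, g i • Aᵀ i = 0 := by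
    rw [Finset.sum_subset B.subset_univ fun i _ hi => by rw [hoff i hi, zero_smul],
      ← hker, mulVec_eq_sum]
    simp
  have hon : ∀ i ∈ B, g i = 0 := linearIndepOn_finset_iff.1 hB g hcomb
  exact hne (funext fun i => if hi : i ∈ B then hon i hi else hoff i hi)

variable [LinearOrder R]

/-- The relation `g ⊑ v`: the vectors are sign-compatible and `g` is coordinatewise at most `v` in
absolute value. Sign-compatibility is encoded by nonnegative products. -/
def ConformsTo (g v : ι → R) : Prop :=
  ∀ i, 0 ≤ g i * v i ∧ |g i| ≤ |v i|

/-- The index set `L(y)`: coordinates of `xstar` exceeding `C` times the `ℓ₁`-norm of `y` on `N`,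
with a general factor `C` in place of `n * κ_A`. -/
def dominantCoords (C : R) (N : Finset ι) (xstar y : ι → R) : Set ι :=
  {i | C * ∑ j ∈ N, |y j| < xstar i}

/-- The index set `R(y)`: coordinates at which `y` is at most `r` times `xstar`, with a general
factor `r` in place of `n - m`. -/
def boundedCoords (r : R) (xstar y : ι → R) : Set ι :=
  {i | y i ≤ r * xstar i}

variable [IsStrictOrderedRing R]

theorem ConformsTo.apply_le_max_zero {g v : ι → R} (hg : ConformsTo g v) (i : ι) :
    g i ≤ max (v i) 0 := by
  obtain ⟨hsign, habs⟩ := hg i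
  rcases le_or_gt (g i) 0 with hgi | hgi
  · exact le_max_of_le_right hgi
  · have hvi : 0 ≤ v i := nonneg_of_mul_nonneg_right hsign hgi
    rw [abs_of_nonneg hvi] at habs
    exact le_max_of_le_left ((le_abs_self _).trans habs)

theorem ConformsTo.apply_nonpos {g v : ι → R} (hg : ConformsTo g v) {i : ι} (hv : v i ≤ 0) :
    g i ≤ 0 :=
  (hg.apply_le_max_zero i).trans (max_le hv le_rfl)

theorem dominantCoords_subset_of_sum_abs_le {C : R} (hC : 0 ≤ C) {N : Finset ι} (xstar : ι → R)
    {y z : ι → R} (hzy : ∑ j ∈ N, |z j| ≤ ∑ j ∈ N, |y j|) :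
    dominantCoords C N xstar y ⊆ dominantCoords C N xstar z :=
  fun _ hi => (mul_le_mul_of_nonneg_left hzy hC).trans_lt hi

theorem dominantCoords_subset_of_eq_zero {C : R} (hC : 0 ≤ C) (N : Finset ι) {xstar : ι → R}
    {S : Set ι} (hxstar : ∀ i ∉ S, xstar i = 0) (y : ι → R) :
    dominantCoords C N xstar y ⊆ S := by
  intro i hi
  by_contra hiS
  have hnorm : 0 ≤ ∑ j ∈ N, |y j| := Finset.sum_nonneg fun _ _ => abs_nonneg _
  exact (mul_nonneg hC hnorm).not_gt (hxstar i hiS ▸ hi)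

theorem boundedCoords_subset_add_smul {g x xstar : ι → R} (hg : ConformsTo g (xstar - x))
    (hx : 0 ≤ x) {α r : R} (hα : 0 ≤ α) (hαr : α ≤ r) (hr : 1 ≤ r) :
    boundedCoords r xstar x ⊆ boundedCoords r xstar (x + α • g) := by
  intro i hi
  change x i ≤ r * xstar i at hi
  change x i + α * g i ≤ r * xstar i
  have hgi : g i ≤ max (xstar i - x i) 0 := hg.apply_le_max_zero i
  rcases le_total (xstar i) (x i) with hle | hle
  · rw [max_eq_right (sub_nonpos.2 hle)] at hgi
    linarith [mul_nonpos_of_nonneg_of_nonpos hα hgi]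
  · have hdiff : 0 ≤ xstar i - x i := sub_nonneg.2 hle
    rw [max_eq_left hdiff] at hgi
    calc x i + α * g i ≤ x i + α * (xstar i - x i) := by gcongr
      _ ≤ x i + r * (xstar i - x i) := by gcongr
      _ = r * xstar i - (r - 1) * x i := by ring
      _ ≤ r * xstar i := sub_le_self _ (mul_nonneg (sub_nonneg.2 hr) (hx i))

theorem sum_abs_add_smul_le {N : Finset ι} {x g : ι → R} {α : R} (hα : 0 ≤ α)
    (hx' : 0 ≤ x + α • g) (hg : ∀ i ∈ N, g i ≤ 0) :
    ∑ i ∈ N, |(x + α • g) i| ≤ ∑ i ∈ N, |x i| := by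
  refine Finset.sum_le_sum fun i hi => ?_
  rw [abs_of_nonneg (hx' i)]
  calc x i + α * g i ≤ x i := add_le_of_nonpos_right (mul_nonpos_of_nonneg_of_nonpos hα (hg i hi))
    _ ≤ |x i| := le_abs_self _

theorem mul_sum_abs_le_sum_abs {N : Finset ι} {x g : ι → R} {α : R}
    (hx' : 0 ≤ x + α • g) (hg : ∀ i ∈ N, g i ≤ 0) :
    α * ∑ i ∈ N, |g i| ≤ ∑ i ∈ N, |x i| := by
  rw [Finset.mul_sum]
  refine Finset.sum_le_sum fun i hi => ?_
  have hxi : 0 ≤ x i + α * g i := hx' i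
  rw [abs_of_nonpos (hg i hi)]
  linarith [le_abs_self (x i)]

theorem sum_abs_sum_le_card_mul [Fintype J] {N : Finset ι} {h : J → ι → R} {c : R}
    (hc : ∀ j, ∑ i ∈ N, |h j i| ≤ c) :
    ∑ i ∈ N, |∑ j, h j i| ≤ Fintype.card J * c :=
  calc ∑ i ∈ N, |∑ j, h j i| ≤ ∑ i ∈ N, ∑ j, |h j i| :=
        Finset.sum_le_sum fun _ _ => Finset.abs_sum_le_sum_abs _ _
    _ = ∑ j, ∑ i ∈ N, |h j i| := Finset.sum_comm
    _ ≤ ∑ _j : J, c := Finset.sum_le_sum fun j _ => hc j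
    _ = Fintype.card J * c := by simp

theorem step_le_card [Fintype J] {N : Finset ι} {x : ι → R} {h : J → ι → R} {α : R} {j₀ : J}
    (hsum : ∀ i ∈ N, ∑ j, h j i = -x i) (hmax : ∀ j, ∑ i ∈ N, |h j i| ≤ ∑ i ∈ N, |h j₀ i|)
    (hpos : 0 < ∑ i ∈ N, |h j₀ i|) (hnonpos : ∀ i ∈ N, h j₀ i ≤ 0)
    (hx' : 0 ≤ x + α • h j₀) : α ≤ Fintype.card J := by
  refine le_of_mul_le_mul_right ?_ hpos
  calc α * ∑ i ∈ N, |h j₀ i| ≤ ∑ i ∈ N, |x i| := mul_sum_abs_le_sum_abs hx' hnonpos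
    _ = ∑ i ∈ N, |∑ j, h j i| := Finset.sum_congr rfl fun i hi => by rw [hsum i hi, abs_neg]
    _ ≤ Fintype.card J * ∑ i ∈ N, |h j₀ i| := sum_abs_sum_le_card_mul hmax

variable [Fintype ι] [DecidableEq ι]

theorem sum_compl_abs_pos_of_mulVec_eq_zero {A : Matrix M ι R} {B : Finset ι}
    (hB : LinearIndepOn R Aᵀ (B : Set ι)) {g : ι → R} (hker : A *ᵥ g = 0) (hne : g ≠ 0) :
    0 < ∑ i ∈ Bᶜ, |g i| := by
  obtain ⟨i, hiB, hgi⟩ := exists_notMem_ne_zero_of_mulVec_eq_zero hB hker hne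
  exact Finset.sum_pos' (fun _ _ => abs_nonneg _)
    ⟨i, Finset.mem_compl.2 hiB, abs_pos.2 hgi⟩

theorem L_R_monotone_general [Fintype J] {A : Matrix M ι R} {B : Finset ι}
    (hB : LinearIndepOn R Aᵀ (B : Set ι)) {xstar x : ι → R} (hxstar : ∀ i ∉ B, xstar i = 0)
    (hx : 0 ≤ x) {h : J → ι → R} (hsum : ∑ j, h j = xstar - x) {j₀ : J}
    (hmax : ∀ j, ∑ i ∈ Bᶜ, |h j i| ≤ ∑ i ∈ Bᶜ, |h j₀ i|) (hker : A *ᵥ h j₀ = 0)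
    (hne : h j₀ ≠ 0) (hconf : ConformsTo (h j₀) (xstar - x)) {α : R} (hα : 0 ≤ α)
    (hx' : 0 ≤ x + α • h j₀) {C r : R} (hC : 0 ≤ C) (hr : Fintype.card J ≤ r) :
    dominantCoords C Bᶜ xstar x ⊆ dominantCoords C Bᶜ xstar (x + α • h j₀) ∧
      dominantCoords C Bᶜ xstar (x + α • h j₀) ⊆ ↑B ∧
      boundedCoords r xstar x ⊆ boundedCoords r xstar (x + α • h j₀) := by
  have hdiff : ∀ i ∈ Bᶜ, (xstar - x) i = -x i := fun i hi => by
    rw [Pi.sub_apply, hxstar i (Finset.mem_compl.1 hi), zero_sub]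
  have hnonpos : ∀ i ∈ Bᶜ, h j₀ i ≤ 0 := fun i hi =>
    hconf.apply_nonpos (hdiff i hi ▸ neg_nonpos.2 (hx i))
  have hsum' : ∀ i ∈ Bᶜ, ∑ j, h j i = -x i := fun i hi => by
    rw [← Finset.sum_apply, hsum, hdiff i hi]
  have hstep : α ≤ Fintype.card J :=
    step_le_card hsum' hmax (sum_compl_abs_pos_of_mulVec_eq_zero hB hker hne) hnonpos hx'
  have hcard : (1 : R) ≤ Fintype.card J := Nat.one_le_cast.2 (Fintype.card_pos_iff.2 ⟨j₀⟩)
  exact ⟨dominantCoords_subset_of_sum_abs_le hC xstar (sum_abs_add_smul_le hα hx' hnonpos),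
    dominantCoords_subset_of_eq_zero hC _ hxstar _,
    boundedCoords_subset_add_smul hconf hx hα (hstep.trans hr) (hcard.trans hr)⟩

end

/-- Monotonicity of the index sets `L` and `R` along one step of the
`shoot towards the optimum' scheme. -/
theorem L_R_monotone {m n : ℕ} (hmn : m < n)
    (A : Matrix (Fin m) (Fin n) ℝ) (hrank : A.rank = m) (b : Fin m → ℝ)
    (P : Set (Fin n → ℝ)) (hP : P = {z : Fin n → ℝ | A.mulVec z = b ∧ 0 ≤ z})
    (B : Finset (Fin n)) (hBcard : B.card = m)
    (hBind : LinearIndependent ℝ (fun i : {i : Fin n // i ∈ B} => A.transpose i.val))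
    (xstar : Fin n → ℝ) (hxstarP : xstar ∈ P) (hxstar0 : ∀ i ∉ B, xstar i = 0)
    (Lset Rset : (Fin n → ℝ) → Set (Fin n))
    (hLset : Lset = fun y => {i | xstar i > (n : ℝ) * circImb A * ∑ j ∈ Bᶜ, |y j|})
    (hRset : Rset = fun y => {i | y i ≤ ((n : ℝ) - m) * xstar i})
    (x : Fin n → ℝ) (hxP : x ∈ P) (hxne : x ≠ xstar)
    (k : ℕ) (hk : k ≤ n - m) (h : Fin k → Fin n → ℝ)
    (hhel : ∀ j, h j ∈ elemVecs A)
    (hhconf : ∀ j i, 0 ≤ h j i * (xstar i - x i) ∧ |h j i| ≤ |xstar i - x i|)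
    (hhsum : (∑ j, h j) = xstar - x)
    (j₀ : Fin k) (hj₀ : ∀ j, (∑ i ∈ Bᶜ, |h j i|) ≤ ∑ i ∈ Bᶜ, |h j₀ i|)
    (g : Fin n → ℝ) (hg : g = h j₀)
    (α : ℝ) (hα : IsGreatest {a : ℝ | 0 ≤ a ∧ x + a • g ∈ P} α)
    (x' : Fin n → ℝ) (hx' : x' = x + α • g) :
    Lset x ⊆ Lset x' ∧ Lset x' ⊆ ↑B ∧ Rset x ⊆ Rset x' := by
  subst hP hLset hRset hg hx'
  have hcard : (Fintype.card (Fin k) : ℝ) ≤ n - m := by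
    rw [Fintype.card_fin, ← Nat.cast_sub hmn.le]
    exact_mod_cast hk
  exact L_R_monotone_general hBind hxstar0 hxP.2 hhsum hj₀ (hhel j₀).1 (hhel j₀).2.1 (hhconf j₀)
    hα.1.1 hα.1.2.2 (mul_nonneg n.cast_nonneg (circImb_nonneg_s14 A)) hcard
end
end
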